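/- arXiv:1310.4528 — 6 statements merged into one kernel-verified Lean document; each statement's English description precedes it below -/
import Mathlib

section
/- Let f : ℝ → ℝ be a monostable nonlinearity. Then there exists a unique function w of class C² on [0,∞) satisfying w'' + f(w) = 0 on (0,∞), w(0) = 0 and lim_{t→+∞} w(t) = 1, which is positive; moreover this w is strictly increasing, satisfies 0 < w(t) < 1 for all t > 0, and is implicitly determined by the formula t = ∫₀^{w(t)} ds / √( 2 ∫_s^1 f(τ) dτ ) for every t ≥ 0. -/
open Set Filter

/-- A monostable nonlinearity: smooth, `f 0 = f 1 = 0`, positive on `(0,1)`, `f' 1 < 0`. -/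
def Monostable (f : ℝ → ℝ) : Prop :=
  ContDiff ℝ (⊤ : ℕ∞) f ∧ f 0 = 0 ∧ f 1 = 0 ∧ (∀ s ∈ Set.Ioo (0 : ℝ) 1, 0 < f s) ∧ deriv f 1 < 0

/-- `w` is a positive solution (of class `C²` on `[0,∞)`) of `w'' + f(w) = 0` on `(0,∞)`
with `w 0 = 0` and `w(+∞) = 1`. -/
def IsPosSolution (f w : ℝ → ℝ) : Prop :=
  ContDiffOn ℝ 2 w (Set.Ici 0) ∧
  (∀ t ∈ Set.Ioi (0 : ℝ),
    derivWithin (derivWithin w (Set.Ici 0)) (Set.Ici 0) t + f (w t) = 0) ∧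
  w 0 = 0 ∧
  Filter.Tendsto w Filter.atTop (nhds 1) ∧
  (∀ t ∈ Set.Ioi (0 : ℝ), 0 < w t)

namespace Het

noncomputable def G (f : ℝ → ℝ) (s : ℝ) : ℝ := ∫ τ in s..(1 : ℝ), f τ

noncomputable def p (f : ℝ → ℝ) (s : ℝ) : ℝ := Real.sqrt (2 * G f s)

noncomputable def T (f : ℝ → ℝ) (x : ℝ) : ℝ := ∫ s in (0 : ℝ)..x, (p f (max s 0))⁻¹

variable {f : ℝ → ℝ}

lemma hasDerivAt_G (hc : Continuous f) (s : ℝ) : HasDerivAt (G f) (-f s) s := by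
  have h := (hc.integral_hasStrictDerivAt 1 s).hasDerivAt.neg
  have e : G f = -(fun u => ∫ x in (1:ℝ)..u, f x) := by
    funext u
    simp only [G, Pi.neg_apply]
    rw [intervalIntegral.integral_symm]
  rw [e]; exact h

lemma continuous_G (hc : Continuous f) : Continuous (G f) :=
  continuous_iff_continuousAt.2 fun s => (hasDerivAt_G hc s).continuousAt

lemma G_one : G f 1 = 0 := by simp [G]

lemma G_pos (hc : Continuous f) (hp : ∀ s ∈ Ioo (0 : ℝ) 1, 0 < f s) {s : ℝ} (h0 : 0 ≤ s)
    (h1 : s < 1) : 0 < G f s := by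
  apply intervalIntegral.intervalIntegral_pos_of_pos_on (hc.intervalIntegrable _ _) _ h1
  intro x hx
  exact hp x ⟨h0.trans_lt hx.1, hx.2⟩

lemma continuous_p (hc : Continuous f) : Continuous (p f) := by
  have := continuous_G hc
  unfold p
  fun_prop

lemma p_pos (hc : Continuous f) (hp : ∀ s ∈ Ioo (0 : ℝ) 1, 0 < f s) {s : ℝ} (h0 : 0 ≤ s)
    (h1 : s < 1) : 0 < p f s :=
  Real.sqrt_pos.2 (by have := G_pos hc hp h0 h1; linarith)

lemma hasDerivAt_p (hc : Continuous f) (hp : ∀ s ∈ Ioo (0 : ℝ) 1, 0 < f s) {s : ℝ} (h0 : 0 ≤ s)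
    (h1 : s < 1) : HasDerivAt (p f) (-f s / p f s) s := by
  have hG := G_pos hc hp h0 h1
  have h := ((hasDerivAt_G hc s).const_mul 2).sqrt (by positivity)
  have hpp := p_pos hc hp h0 h1
  have e : -f s / p f s = 2 * -f s / (2 * p f s) := by field_simp
  rw [e]; exact h

/-- quadratic bound on `G` -/
lemma G_le (hf : ContDiff ℝ (⊤ : ℕ∞) f) (hf1 : f 1 = 0) {M : ℝ} (hM : 1 ≤ M) :
    ∃ K : ℝ, 0 < K ∧ ∀ s ∈ Icc 0 M, 2 * G f s ≤ (K * (1 - s)) ^ 2 := by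
  have hd : Differentiable ℝ f := hf.differentiable (by simp)
  have hcd : Continuous (deriv f) := hf.continuous_deriv (by simp)
  obtain ⟨C, hC⟩ := (isCompact_Icc (a := (0:ℝ)) (b := M)).exists_bound_of_continuousOn
    hcd.continuousOn
  have hC0 : 0 ≤ C := (norm_nonneg _).trans (hC 1 ⟨zero_le_one, hM⟩)
  have hb : ∀ s ∈ Icc 0 M, ‖f s‖ ≤ C * |s - 1| := by
    intro s hs
    have := (convex_Icc (0:ℝ) M).norm_image_sub_le_of_norm_deriv_le (f := f) (C := C)
      (fun x _ => hd x) hC (x := 1) (y := s) ⟨zero_le_one, hM⟩ hs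
    simpa [hf1] using this
  refine ⟨Real.sqrt (2 * C + 1), Real.sqrt_pos.2 (by linarith), ?_⟩
  intro s hs
  have h1 : ‖G f s‖ ≤ (C * |s - 1|) * |1 - s| := by
    apply intervalIntegral.norm_integral_le_of_norm_le_const
    intro x hx
    have hx' : x ∈ uIcc s 1 := uIoc_subset_uIcc hx
    have hxM : x ∈ Icc 0 M := by
      have : uIcc s 1 ⊆ Icc 0 M := uIcc_subset_Icc hs ⟨zero_le_one, hM⟩
      exact this hx'
    refine (hb x hxM).trans ?_
    have : |1 - x| ≤ |1 - s| := abs_sub_right_of_mem_uIcc hx'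
    rw [abs_sub_comm x, abs_sub_comm s]
    gcongr
  rw [mul_pow, Real.sq_sqrt (by linarith)]
  have h2 : G f s ≤ C * |s - 1| * |1 - s| := (le_abs_self _).trans h1
  rw [abs_sub_comm s, mul_assoc, abs_mul_abs_self] at h2
  nlinarith [sq_nonneg (1 - s)]

lemma hq (hc : Continuous f) (hp : ∀ s ∈ Ioo (0 : ℝ) 1, 0 < f s) {s : ℝ} (h1 : s < 1) :
    0 < p f (max s 0) := p_pos hc hp (le_max_right _ _) (max_lt h1 one_pos)

lemma hasDerivAt_T (hc : Continuous f) (hp : ∀ s ∈ Ioo (0 : ℝ) 1, 0 < f s) {x : ℝ} (h1 : x < 1) :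
    HasDerivAt (T f) (p f (max x 0))⁻¹ x := by
  have hcp := continuous_p hc
  have hco : ContinuousOn (fun s => (p f (max s 0))⁻¹) (Iio 1) := by
    apply ContinuousOn.inv₀
    · fun_prop
    · intro s hs; exact (hq hc hp hs).ne'
  apply intervalIntegral.integral_hasDerivAt_right
  · apply (hco.mono _).intervalIntegrable
    intro y hy
    exact lt_of_le_of_lt hy.2 (max_lt one_pos h1)
  · exact hco.stronglyMeasurableAtFilter isOpen_Iio _ h1
  · exact hco.continuousAt (isOpen_Iio.mem_nhds h1)

lemma T_zero : T f 0 = 0 := by simp [T]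

lemma T_strictMono (hc : Continuous f) (hp : ∀ s ∈ Ioo (0 : ℝ) 1, 0 < f s) :
    StrictMonoOn (T f) (Iio 1) := by
  apply strictMonoOn_of_deriv_pos (convex_Iio 1)
  · intro x hx; exact (hasDerivAt_T hc hp hx).continuousAt.continuousWithinAt
  · intro x hx
    rw [interior_Iio] at hx
    rw [(hasDerivAt_T hc hp hx).deriv]
    exact inv_pos.2 (hq hc hp hx)

lemma T_neg {x : ℝ} (hx : x ≤ 0) : T f x = x * (p f 0)⁻¹ := by
  unfold T
  rw [intervalIntegral.integral_congr (g := fun _ => (p f 0)⁻¹)]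
  · simp
  · intro s hs
    rw [uIcc_of_ge hx] at hs
    simp [max_eq_right hs.2]

lemma T_log (hf : ContDiff ℝ (⊤ : ℕ∞) f) (hf1 : f 1 = 0) (hp : ∀ s ∈ Ioo (0 : ℝ) 1, 0 < f s) :
    ∃ K : ℝ, 0 < K ∧ ∀ x ∈ Ico (0:ℝ) 1, -Real.log (1 - x) / K ≤ T f x := by
  have hc := hf.continuous
  obtain ⟨K, hK, hb⟩ := G_le hf hf1 le_rfl
  refine ⟨K, hK, ?_⟩
  have hder : ∀ x ∈ Iio (1:ℝ), HasDerivAt (fun x => T f x + Real.log (1 - x) / K)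
      ((p f (max x 0))⁻¹ + (-1 / (1 - x)) / K) x := by
    intro x hx
    have h1 : (1:ℝ) - x ≠ 0 := by have : x < 1 := hx; linarith
    exact (hasDerivAt_T hc hp hx).add ((((hasDerivAt_id x).const_sub 1).log h1).div_const K)
  have hm : MonotoneOn (fun x => T f x + Real.log (1 - x) / K) (Ico 0 1) := by
    apply monotoneOn_of_deriv_nonneg (convex_Ico 0 1)
    · intro x hx; exact (hder x hx.2).continuousAt.continuousWithinAt
    · intro x hx
      rw [interior_Ico] at hx
      exact (hder x hx.2).differentiableAt.differentiableWithinAt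
    · intro x hx
      rw [interior_Ico] at hx
      rw [(hder x hx.2).deriv]
      have h1 : 0 < 1 - x := by linarith [hx.2]
      have hpx := p_pos hc hp hx.1.le hx.2
      have : p f x ≤ K * (1 - x) := by
        apply Real.sqrt_le_iff.2
        exact ⟨by positivity, hb x ⟨hx.1.le, hx.2.le⟩⟩
      rw [max_eq_left hx.1.le]
      have h2 : (K * (1 - x))⁻¹ ≤ (p f x)⁻¹ := by gcongr
      have h3 : (-1 / (1 - x)) / K = -(K * (1 - x))⁻¹ := by field_simp
      rw [h3]; linarith
  intro x hx
  have := hm (left_mem_Ico.2 one_pos) hx hx.1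
  simp [T_zero] at this
  rw [neg_div]; linarith

lemma T_surj (hf : ContDiff ℝ (⊤ : ℕ∞) f) (hf1 : f 1 = 0) (hp : ∀ s ∈ Ioo (0 : ℝ) 1, 0 < f s)
    (t : ℝ) : ∃ x ∈ Iio (1:ℝ), T f x = t := by
  have hc := hf.continuous
  have hp0 := p_pos hc hp le_rfl one_pos
  rcases le_total t 0 with h | h
  · refine ⟨t * p f 0, lt_of_le_of_lt (mul_nonpos_of_nonpos_of_nonneg h hp0.le) one_pos, ?_⟩
    rw [T_neg (mul_nonpos_of_nonpos_of_nonneg h hp0.le)]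
    field_simp
  · obtain ⟨K, hK, hb⟩ := T_log hf hf1 hp
    set b := 1 - Real.exp (-(K * t)) with hbd
    have hb0 : 0 ≤ b := by
      have : Real.exp (-(K * t)) ≤ 1 := Real.exp_le_one_iff.2 (by have := mul_nonneg hK.le h; linarith)
      linarith
    have hb1 : b < 1 := by have := Real.exp_pos (-(K * t)); linarith
    have hTb : t ≤ T f b := by
      have := hb b ⟨hb0, hb1⟩
      have e : 1 - b = Real.exp (-(K * t)) := by rw [hbd]; ring
      rw [e, Real.log_exp, neg_neg] at this
      rwa [mul_div_cancel_left₀ _ hK.ne'] at this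
    have hco : ContinuousOn (T f) (Icc 0 b) := fun x hx =>
      (hasDerivAt_T hc hp (hx.2.trans_lt hb1)).continuousAt.continuousWithinAt
    obtain ⟨x, hx, hxt⟩ := intermediate_value_Icc hb0 hco ⟨by rw [T_zero]; exact h, hTb⟩
    exact ⟨x, hx.2.trans_lt hb1, hxt⟩

lemma contDiffOn_two {w v a : ℝ → ℝ} (h1 : ∀ t ∈ Ici (0:ℝ), HasDerivWithinAt w (v t) (Ici 0) t)
    (h2 : ∀ t ∈ Ici (0:ℝ), HasDerivWithinAt v (a t) (Ici 0) t) (ha : ContinuousOn a (Ici 0)) :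
    ContDiffOn ℝ 2 w (Ici 0) ∧
      ∀ t ∈ Ici (0:ℝ), derivWithin (derivWithin w (Ici 0)) (Ici 0) t = a t := by
  have hu := uniqueDiffOn_Ici (0:ℝ)
  have e1 : ∀ t ∈ Ici (0:ℝ), derivWithin w (Ici 0) t = v t := fun t ht =>
    (h1 t ht).derivWithin (hu t ht)
  have e2 : ∀ t ∈ Ici (0:ℝ), derivWithin v (Ici 0) t = a t := fun t ht =>
    (h2 t ht).derivWithin (hu t ht)
  constructor
  · have hv : ContDiffOn ℝ 1 v (Ici 0) := by
      rw [show (1 : WithTop ℕ∞) = 0 + 1 from (zero_add _).symm, contDiffOn_succ_iff_derivWithin hu]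
      refine ⟨fun t ht => (h2 t ht).differentiableWithinAt, by simp, ?_⟩
      rw [contDiffOn_zero]
      exact ha.congr e2
    rw [show (2 : WithTop ℕ∞) = 1 + 1 from by norm_num, contDiffOn_succ_iff_derivWithin hu]
    exact ⟨fun t ht => (h1 t ht).differentiableWithinAt, by simp, hv.congr e1⟩
  · intro t ht
    rw [derivWithin_congr e1 (e1 t ht), e2 t ht]

/-- every solution satisfies the energy identity -/
lemma energy (hc : Continuous f) {u v : ℝ → ℝ}
    (hu : ∀ t ∈ Ici (0:ℝ), HasDerivWithinAt u (v t) (Ici 0) t) (hvc : ContinuousOn v (Ici 0))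
    (hv : ∀ t ∈ Ioi (0:ℝ), HasDerivAt v (-f (u t)) t)
    (hlim : Tendsto u atTop (nhds 1)) :
    ∀ t ∈ Ici (0:ℝ), v t ^ 2 = 2 * G f (u t) := by
  have huc : ContinuousOn u (Ici 0) := fun t ht => (hu t ht).continuousWithinAt
  have hu' : ∀ t ∈ Ioi (0:ℝ), HasDerivAt u (v t) t := fun t ht =>
    (hu t (mem_Ici.2 (le_of_lt ht))).hasDerivAt (Ici_mem_nhds ht)
  have hGc := continuous_G hc
  set E : ℝ → ℝ := fun t => v t ^ 2 - 2 * G f (u t) with hE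
  have hEc : ContinuousOn E (Ici 0) :=
    (hvc.pow 2).sub (continuousOn_const.mul (hGc.comp_continuousOn huc))
  have hE' : ∀ t ∈ Ioi (0:ℝ), HasDerivAt E 0 t := by
    intro t ht
    have := ((hv t ht).pow 2).sub (((hasDerivAt_G hc (u t)).comp t (hu' t ht)).const_mul 2)
    refine this.congr_deriv ?_
    push_cast; ring
  have hconst : ∀ t ∈ Ici (0:ℝ), E t = E 0 := by
    intro t ht
    rcases eq_or_lt_of_le (mem_Ici.1 ht) with h | h
    · rw [h]
    · obtain ⟨c, hcc, he⟩ := exists_hasDerivAt_eq_slope E (fun _ => 0) h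
        (hEc.mono Icc_subset_Ici_self) (fun x hx => hE' x hx.1)
      rcases div_eq_zero_iff.1 he.symm with h' | h' <;> linarith
  -- points where `v` is small
  have hmv : ∀ n : ℕ, ∃ c : ℝ, (n:ℝ) < c ∧ v c = u (n + 1) - u n := by
    intro n
    have hn : (0:ℝ) ≤ n := n.cast_nonneg
    obtain ⟨c, hcc, he⟩ := exists_hasDerivAt_eq_slope u v (a := n) (b := n + 1) (by linarith)
      (huc.mono (Icc_subset_Ici_self.trans (Ici_subset_Ici.2 hn)))
      (fun x hx => hu' x (hn.trans_lt hx.1))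
    exact ⟨c, hcc.1, by rw [he]; simp⟩
  choose c hcn hcv using hmv
  have hct : Tendsto c atTop atTop :=
    tendsto_atTop_mono (fun n => (hcn n).le) tendsto_natCast_atTop_atTop
  have hnn : Tendsto (fun n : ℕ => (n:ℝ)) atTop atTop := tendsto_natCast_atTop_atTop
  have hvc0 : Tendsto (fun n => v (c n)) atTop (nhds 0) := by
    have h1 := hlim.comp (tendsto_atTop_add_const_right _ (1:ℝ) hnn)
    have h2 := h1.sub (hlim.comp hnn)
    rw [sub_self] at h2
    exact h2.congr (fun n => (hcv n).symm)
  have hEl : Tendsto (fun n => E (c n)) atTop (nhds 0) := by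
    have h1 := (hvc0.pow 2).sub (((hGc.tendsto 1).comp (hlim.comp hct)).const_mul 2)
    rw [G_one] at h1
    simpa using h1
  have hE0 : E 0 = 0 := by
    refine tendsto_nhds_unique (tendsto_const_nhds.congr fun n => ?_) hEl
    exact (hconst (c n) (mem_Ici.2 (n.cast_nonneg.trans (hcn n).le))).symm
  intro t ht
  have := hconst t ht
  rw [hE0] at this
  simp only [hE] at this
  linarith

/-- a solution stays below one -/
lemma lt_one (hf : ContDiff ℝ (⊤ : ℕ∞) f) (hf1 : f 1 = 0) {u v : ℝ → ℝ}
    (hu : ∀ t ∈ Ici (0:ℝ), HasDerivWithinAt u (v t) (Ici 0) t)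
    (he : ∀ t ∈ Ici (0:ℝ), v t ^ 2 = 2 * G f (u t))
    (hu0 : u 0 = 0) (hpos : ∀ t ∈ Ioi (0:ℝ), 0 < u t) :
    ∀ t ∈ Ici (0:ℝ), u t < 1 := by
  have huc : ContinuousOn u (Ici 0) := fun t ht => (hu t ht).continuousWithinAt
  have hu' : ∀ t ∈ Ioi (0:ℝ), HasDerivAt u (v t) t := fun t ht =>
    (hu t (mem_Ici.2 (le_of_lt ht))).hasDerivAt (Ici_mem_nhds ht)
  intro t ht
  by_contra! hcon
  obtain ⟨t₁, ht₁, hut₁⟩ := intermediate_value_Icc (mem_Ici.1 ht)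
    (huc.mono Icc_subset_Ici_self) (show (1:ℝ) ∈ Icc (u 0) (u t) from ⟨by rw [hu0]; norm_num, hcon⟩)
  have huc₁ : ContinuousOn u (Icc 0 t₁) := huc.mono Icc_subset_Ici_self
  obtain ⟨C, hC⟩ := isCompact_Icc.exists_bound_of_continuousOn huc₁
  have hC1 : 1 ≤ C := by
    have := hC t₁ (right_mem_Icc.2 ht₁.1)
    simpa [hut₁] using this
  obtain ⟨K, hK, hb⟩ := G_le hf hf1 hC1
  have hder : ∀ x ∈ Ioi (0:ℝ), HasDerivAt (fun x => (1 - u x) ^ 2 * Real.exp (2 * K * x))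
      (((2:ℕ) * (1 - u x) ^ 1 * (-v x)) * Real.exp (2 * K * x) +
        (1 - u x) ^ 2 * (Real.exp (2 * K * x) * (2 * K * 1))) x := by
    intro x hx
    exact (((hu' x hx).const_sub 1).pow 2).mul (((hasDerivAt_id x).const_mul (2 * K)).exp)
  have hm : MonotoneOn (fun x => (1 - u x) ^ 2 * Real.exp (2 * K * x)) (Icc 0 t₁) := by
    apply monotoneOn_of_deriv_nonneg (convex_Icc 0 t₁)
    · apply ContinuousOn.mul
      · exact (continuousOn_const.sub huc₁).pow 2
      · fun_prop
    · intro x hx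
      rw [interior_Icc] at hx
      exact (hder x hx.1).differentiableAt.differentiableWithinAt
    · intro x hx
      rw [interior_Icc] at hx
      rw [(hder x hx.1).deriv]
      have h1 := hb (u x) ⟨(hpos x hx.1).le, (le_abs_self _).trans (hC x ⟨hx.1.le, hx.2.le⟩)⟩
      rw [← he x (mem_Ici.2 hx.1.le)] at h1
      have h2 : |v x| ≤ |K * (1 - u x)| := sq_le_sq.1 h1
      rw [abs_mul, abs_of_pos hK] at h2
      have h3 : (1 - u x) * v x ≤ K * (1 - u x) ^ 2 := by
        calc (1 - u x) * v x ≤ |(1 - u x) * v x| := le_abs_self _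
          _ = |1 - u x| * |v x| := abs_mul _ _
          _ ≤ |1 - u x| * (K * |1 - u x|) := by gcongr
          _ = K * (|1 - u x| * |1 - u x|) := by ring
          _ = K * (1 - u x) ^ 2 := by rw [abs_mul_abs_self]; ring
      have h4 := Real.exp_pos (2 * K * x)
      have h5 : (((2:ℕ):ℝ) * (1 - u x) ^ 1 * (-v x)) * Real.exp (2 * K * x) +
        (1 - u x) ^ 2 * (Real.exp (2 * K * x) * (2 * K * 1)) =
        2 * Real.exp (2 * K * x) * (K * (1 - u x) ^ 2 - (1 - u x) * v x) := by push_cast; ring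
      rw [h5]
      exact mul_nonneg (by positivity) (by linarith)
  have := hm (left_mem_Icc.2 ht₁.1) (right_mem_Icc.2 ht₁.1) ht₁.1
  simp [hu0, hut₁] at this
  linarith

/-- every solution inverts `T` -/
lemma sol_T (hf : Monostable f) {u : ℝ → ℝ} (hs : IsPosSolution f u) :
    ∀ t ∈ Ici (0:ℝ), u t < 1 ∧ T f (u t) = t := by
  obtain ⟨hfs, hf0, hf1, hp, -⟩ := hf
  obtain ⟨hcd, hode, hu0, hlim, hpos⟩ := hs
  have hc := hfs.continuous
  have hud := uniqueDiffOn_Ici (0:ℝ)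
  set v := derivWithin u (Ici 0) with hvdef
  rw [show (2 : WithTop ℕ∞) = 1 + 1 from by norm_num, contDiffOn_succ_iff_derivWithin hud] at hcd
  obtain ⟨hd, -, hv1⟩ := hcd
  have hu : ∀ t ∈ Ici (0:ℝ), HasDerivWithinAt u (v t) (Ici 0) t := fun t ht =>
    (hd t ht).hasDerivWithinAt
  have hvd : ∀ t ∈ Ioi (0:ℝ), HasDerivAt v (-f (u t)) t := by
    intro t ht
    have h1 := ((hv1.differentiableOn (by simp)) t (mem_Ici.2 (le_of_lt ht))).hasDerivWithinAt
    have h2 := hode t ht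
    rw [eq_neg_of_add_eq_zero_left h2] at h1
    exact h1.hasDerivAt (Ici_mem_nhds ht)
  have hvc : ContinuousOn v (Ici 0) := hv1.continuousOn
  have he := energy hc hu hvc hvd hlim
  have hlt := lt_one hfs hf1 hu he hu0 hpos
  have huc : ContinuousOn u (Ici 0) := fun t ht => (hu t ht).continuousWithinAt
  have hu' : ∀ t ∈ Ioi (0:ℝ), HasDerivAt u (v t) t := fun t ht =>
    (hu t (mem_Ici.2 (le_of_lt ht))).hasDerivAt (Ici_mem_nhds ht)
  have hnn : ∀ t ∈ Ici (0:ℝ), 0 ≤ u t := by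
    intro t ht
    rcases eq_or_lt_of_le (mem_Ici.1 ht) with h | h
    · rw [← h, hu0]
    · exact (hpos t h).le
  have hv0 : ∀ t ∈ Ici (0:ℝ), v t ≠ 0 := by
    intro t ht h0
    have h1 := he t ht
    have h2 := G_pos hc hp (hnn t ht) (hlt t ht)
    rw [h0] at h1
    linarith
  -- a point where `v` is positive
  obtain ⟨c, hcm, hcv⟩ := exists_hasDerivAt_eq_slope u v one_pos
      (huc.mono Icc_subset_Ici_self) (fun x hx => hu' x hx.1)
  have hvcpos : 0 < v c := by
    rw [hcv, hu0]
    have := hpos 1 (mem_Ioi.2 one_pos)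
    simpa using this
  have hvpos : ∀ t ∈ Ici (0:ℝ), 0 < v t := by
    intro t ht
    by_contra! hneg
    have hpre : IsPreconnected (v '' Ici 0) := isPreconnected_Ici.image v hvc
    have : (0:ℝ) ∈ v '' Ici 0 := hpre.ordConnected.out (mem_image_of_mem v ht)
      (mem_image_of_mem v (mem_Ici.2 hcm.1.le)) ⟨hneg, hvcpos.le⟩
    obtain ⟨x, hx, hx0⟩ := this
    exact hv0 x hx hx0
  have hvp : ∀ t ∈ Ici (0:ℝ), v t = p f (u t) := by
    intro t ht
    unfold p
    rw [← he t ht, Real.sqrt_sq (hvpos t ht).le]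
  intro t ht
  refine ⟨hlt t ht, ?_⟩
  rcases eq_or_lt_of_le (mem_Ici.1 ht) with h | h
  · rw [← h, hu0, T_zero]
  have hder : ∀ x ∈ Ioi (0:ℝ), HasDerivAt (fun x => T f (u x)) 1 x := by
    intro x hx
    have hx' : x ∈ Ici (0:ℝ) := mem_Ici.2 (le_of_lt hx)
    have h1 := (hasDerivAt_T hc hp (hlt x hx')).comp x (hu' x hx)
    rw [max_eq_left (hnn x hx'), hvp x hx', inv_mul_cancel₀
      (p_pos hc hp (hnn x hx') (hlt x hx')).ne'] at h1
    exact h1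
  have hTc : ContinuousOn (fun x => T f (u x)) (Icc 0 t) := by
    intro x hx
    exact (hasDerivAt_T hc hp (hlt x hx.1)).continuousAt.comp_continuousWithinAt
      ((huc x hx.1).mono Icc_subset_Ici_self)
  obtain ⟨d, -, hd'⟩ := exists_hasDerivAt_eq_slope (fun x => T f (u x)) (fun _ => 1) h
    hTc (fun x hx => hder x hx.1)
  simp only [hu0, T_zero, sub_zero] at hd'
  rw [eq_div_iff h.ne'] at hd'
  linarith

end Het

open Het in
/-- For a monostable `f` there is a unique positive `C²` solution of
`w'' + f(w) = 0` on `(0,∞)` with `w(0)=0`, `w(+∞)=1`; it is strictly increasing, takes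
values in `(0,1)` on `(0,∞)`, and satisfies the implicit formula
`t = ∫₀^{w(t)} ds / √(2 ∫_s^1 f)`. -/
theorem heteroclinic_exists_unique (f : ℝ → ℝ) (hf : Monostable f) :
    ∃ w : ℝ → ℝ,
      IsPosSolution f w ∧
      (∀ w₂ : ℝ → ℝ, IsPosSolution f w₂ → Set.EqOn w₂ w (Set.Ici 0)) ∧
      StrictMonoOn w (Set.Ici 0) ∧
      (∀ t ∈ Set.Ioi (0 : ℝ), 0 < w t ∧ w t < 1) ∧
      (∀ t ∈ Set.Ici (0 : ℝ),
        t = ∫ s in (0 : ℝ)..(w t), (Real.sqrt (2 * ∫ τ in s..(1 : ℝ), f τ))⁻¹) := by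
  have hf' := hf
  obtain ⟨hfs, hf0, hf1, hp, -⟩ := hf
  have hc := hfs.continuous
  have hTm := T_strictMono hc hp
  choose w hw1 hwT using T_surj hfs hf1 hp
  have hwm : StrictMono w := by
    intro s t hst
    rw [← hTm.lt_iff_lt (hw1 s) (hw1 t), hwT, hwT]
    exact hst
  have hwinv : ∀ x ∈ Iio (1:ℝ), w (T f x) = x := fun x hx =>
    hTm.injOn (hw1 _) hx (hwT _)
  have hw0 : w 0 = 0 := by
    have := hwinv 0 (mem_Iio.2 one_pos)
    rwa [T_zero] at this
  have hwpos : ∀ t ∈ Ioi (0:ℝ), 0 < w t := fun t ht => by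
    rw [← hw0]; exact hwm ht
  have hwnn : ∀ t ∈ Ici (0:ℝ), 0 ≤ w t := fun t ht => by
    rw [← hw0]; exact hwm.monotone ht
  have hwc : ∀ t, ContinuousAt w t := by
    intro t
    apply (hwm.strictMonoOn univ).continuousAt_of_image_mem_nhds univ_mem
    apply mem_of_superset (Iio_mem_nhds (hw1 t))
    intro x hx
    exact ⟨T f x, mem_univ _, hwinv x hx⟩
  have hwcont : Continuous w := continuous_iff_continuousAt.2 hwc
  have hwd : ∀ t ∈ Ici (0:ℝ), HasDerivAt w (p f (w t)) t := by
    intro t ht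
    have h1 := hasDerivAt_T hc hp (hw1 t)
    have h2 := HasDerivAt.of_local_left_inverse (hwc t) h1
      (inv_ne_zero (hq hc hp (hw1 t)).ne') (Eventually.of_forall hwT)
    rwa [inv_inv, max_eq_left (hwnn t ht)] at h2
  have hwd2 : ∀ t ∈ Ici (0:ℝ), HasDerivAt (fun t => p f (w t)) (-f (w t)) t := by
    intro t ht
    have h1 := (hasDerivAt_p hc hp (hwnn t ht) (hw1 t)).comp t (hwd t ht)
    rwa [div_mul_cancel₀ _ (p_pos hc hp (hwnn t ht) (hw1 t)).ne'] at h1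
  obtain ⟨hC2, hdd⟩ := contDiffOn_two (fun t ht => (hwd t ht).hasDerivWithinAt)
    (fun t ht => (hwd2 t ht).hasDerivWithinAt) (hc.comp hwcont).neg.continuousOn
  refine ⟨w, ⟨hC2, ?_, hw0, ?_, hwpos⟩, ?_, hwm.strictMonoOn _, fun t ht => ⟨hwpos t ht, hw1 t⟩, ?_⟩
  · intro t ht
    rw [hdd t (mem_Ici.2 (le_of_lt ht))]
    simp
  · apply tendsto_order.2 ⟨?_, ?_⟩
    · intro a ha
      filter_upwards [eventually_gt_atTop (T f a)] with t ht
      rw [← hwinv a ha]; exact hwm ht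
    · intro a ha
      exact Eventually.of_forall fun t => (hw1 t).trans ha
  · intro w₂ hw₂ t ht
    obtain ⟨h1, h2⟩ := sol_T hf' hw₂ t ht
    exact hTm.injOn h1 (hw1 t) (h2.trans (hwT t).symm)
  · intro t ht
    conv_lhs => rw [← hwT t]
    unfold T
    apply intervalIntegral.integral_congr
    intro s hs
    rw [uIcc_of_le (hwnn t ht)] at hs
    simp only [max_eq_left hs.1]
    rfl
end

section
/- Let f be a monostable nonlinearity and w the associated heteroclinic. Let q : [0,∞) → ℝ be bounded and continuous, and let p(t) = w'(t) · ∫₀^t (1/w'(τ)²) ( ∫₀^τ w'(s) q(s) ds ) dτ be the solution of p'' + f'(w(t)) p = q on (0,∞) with p(0) = p'(0) = 0. Then p is bounded on [0,∞) if and only if ∫₀^∞ q(t) w'(t) dt = 0. -/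
open Set Filter MeasureTheory

/-- The heteroclinic associated with `f`. -/
def IsHeteroclinic (f w : ℝ → ℝ) : Prop :=
  ContDiffOn ℝ 2 w (Set.Ici 0) ∧
  (∀ t ∈ Set.Ioi (0 : ℝ),
    derivWithin (derivWithin w (Set.Ici 0)) (Set.Ici 0) t + f (w t) = 0) ∧
  w 0 = 0 ∧
  Filter.Tendsto w Filter.atTop (nhds 1) ∧
  (∀ t ∈ Set.Ioi (0 : ℝ), 0 < w t) ∧
  StrictMonoOn w (Set.Ici 0) ∧
  (∀ t ∈ Set.Ici (0 : ℝ), 0 < derivWithin w (Set.Ici 0) t)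

lemma aux_core (w v F q : ℝ → ℝ) (hwc : ContinuousOn w (Ici 0)) (hvc : ContinuousOn v (Ici 0))
    (hvpos : ∀ t ∈ Ici (0:ℝ), 0 < v t)
    (hwd : ∀ t, 0 < t → HasDerivAt w (v t) t)
    (hvd : ∀ t, 0 < t → HasDerivAt v (-(F t)) t)
    (hFpos : ∀ t, 0 < t → 0 < F t)
    (hFc : ContinuousOn F (Ici 0))
    (hw1 : Tendsto w atTop (nhds 1))
    (hF0 : Tendsto F atTop (nhds 0))
    (C : ℝ) (hC : 0 < C) (hFC : ∀ᶠ t in atTop, 1 - w t ≤ C * F t)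
    (hq : ContinuousOn q (Ici 0)) (M : ℝ) (hM : ∀ t ∈ Ici (0:ℝ), |q t| ≤ M) :
    (∃ B : ℝ, ∀ t ∈ Ici (0 : ℝ), |v t * ∫ τ in (0 : ℝ)..t, ((v τ) ^ 2)⁻¹ *
        ∫ s in (0 : ℝ)..τ, v s * q s| ≤ B) ↔
      (∫ t in Ioi (0 : ℝ), q t * v t) = 0 := by
  have hM0 : 0 ≤ M := (abs_nonneg _).trans (hM 0 (by simp))
  have hsub : ∀ a b : ℝ, 0 ≤ a → 0 ≤ b → uIcc a b ⊆ Ici 0 := by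
    intro a b ha hb x hx
    exact (le_min ha hb).trans hx.1
  have hii : ∀ {g : ℝ → ℝ}, ContinuousOn g (Ici 0) → ∀ a b : ℝ, 0 ≤ a → 0 ≤ b →
      IntervalIntegrable g volume a b := fun hg a b ha hb =>
    (hg.mono (hsub a b ha hb)).intervalIntegrable
  have hvq : ContinuousOn (fun s => v s * q s) (Ici 0) := hvc.mul hq
  set Q : ℝ → ℝ := fun τ => ∫ s in (0 : ℝ)..τ, v s * q s with hQ
  -- primitives are continuous
  have hprim : ∀ {g : ℝ → ℝ}, ContinuousOn g (Ici 0) →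
      ContinuousOn (fun τ => ∫ s in (0:ℝ)..τ, g s) (Ici 0) := by
    intro g hg x hx
    have hx0 : (0:ℝ) ≤ x := hx
    have h1 := intervalIntegral.continuousOn_primitive_interval (f := g) (μ := volume)
      (a := 0) (b := x + 1) (by
        have := (hg.mono (hsub 0 (x+1) le_rfl (by linarith))).integrableOn_compact
          (μ := volume) isCompact_uIcc
        exact this)
    rw [uIcc_of_le (by linarith)] at h1
    have h2 := h1 x ⟨hx, by linarith⟩
    refine h2.mono_of_mem_nhdsWithin ?_
    have : Iio (x+1) ∈ nhds x := Iio_mem_nhds (by linarith)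
    filter_upwards [self_mem_nhdsWithin, mem_nhdsWithin_of_mem_nhds this] with y hy1 hy2
    exact ⟨hy1, le_of_lt hy2⟩
  have hQc : ContinuousOn Q (Ici 0) := hprim hvq
  have hv2c : ContinuousOn (fun τ => ((v τ)^2)⁻¹) (Ici 0) :=
    (hvc.pow 2).inv₀ (fun t ht => (pow_pos (hvpos t ht) 2).ne')
  have hgc : ContinuousOn (fun τ => ((v τ)^2)⁻¹ * Q τ) (Ici 0) := hv2c.mul hQc
  set I : ℝ → ℝ := fun t => ∫ τ in (0 : ℝ)..t, ((v τ) ^ 2)⁻¹ * Q τ with hI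
  have hIc : ContinuousOn I (Ici 0) := hprim hgc
  have hIsub : ∀ a b : ℝ, 0 ≤ a → 0 ≤ b → I b - I a = ∫ τ in a..b, ((v τ) ^ 2)⁻¹ * Q τ :=
    fun a b ha hb => intervalIntegral.integral_interval_sub_left
      (hii hgc 0 b le_rfl hb) (hii hgc 0 a le_rfl ha)
  have hQsub : ∀ a b : ℝ, 0 ≤ a → 0 ≤ b → Q b - Q a = ∫ τ in a..b, v τ * q τ :=
    fun a b ha hb => intervalIntegral.integral_interval_sub_left
      (hii hvq 0 b le_rfl hb) (hii hvq 0 a le_rfl ha)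
  -- v integrable
  have hvint : IntegrableOn v (Ioi 0) :=
    integrableOn_Ioi_deriv_of_nonneg (hwc 0 (by simp)) (fun x hx => hwd x hx)
      (fun x hx => (hvpos x (Ioi_subset_Ici_self hx)).le) hw1
  have hqvint : IntegrableOn (fun t => v t * q t) (Ioi 0) := by
    refine Integrable.mono' (hvint.const_mul M)
      ((hvq.mono Ioi_subset_Ici_self).aestronglyMeasurable measurableSet_Ioi) ?_
    refine (ae_restrict_iff' measurableSet_Ioi).2 (Eventually.of_forall fun t ht => ?_)
    have ht' : t ∈ Ici (0:ℝ) := Ioi_subset_Ici_self ht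
    rw [Real.norm_eq_abs, abs_mul, abs_of_pos (hvpos t ht'), mul_comm]
    exact mul_le_mul_of_nonneg_right (hM t ht') (hvpos t ht').le
  set L : ℝ := ∫ t in Ioi (0 : ℝ), q t * v t with hL
  have hQL : Tendsto Q atTop (nhds L) := by
    have := intervalIntegral_tendsto_integral_Ioi 0 hqvint tendsto_id
    have e : L = ∫ t in Ioi (0 : ℝ), v t * q t := by
      rw [hL]; congr 1; ext t; ring
    rw [e]; exact this
  -- tail estimate
  have hwint : ∀ a b : ℝ, 0 < a → a ≤ b → ∫ t in a..b, v t = w b - w a := by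
    intro a b ha hab
    refine intervalIntegral.integral_eq_sub_of_hasDerivAt (fun x hx => hwd x ?_)
      (hii hvc a b ha.le (ha.le.trans hab))
    rw [uIcc_of_le hab] at hx; exact ha.trans_le hx.1
  have htail : ∀ a, 0 < a → |L - Q a| ≤ M * (1 - w a) := by
    intro a ha
    have t1 : Tendsto (fun b => |Q b - Q a|) atTop (nhds |L - Q a|) :=
      (hQL.sub_const _).abs
    have t2 : Tendsto (fun b => M * (w b - w a)) atTop (nhds (M * (1 - w a))) :=
      (hw1.sub_const _).const_mul M
    refine le_of_tendsto_of_tendsto t1 t2 ?_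
    filter_upwards [eventually_ge_atTop a] with b hb
    rw [hQsub a b ha.le (ha.le.trans hb), ← hwint a b ha hb,
      ← intervalIntegral.integral_const_mul, ← Real.norm_eq_abs]
    refine intervalIntegral.norm_integral_le_of_norm_le hb
      (Eventually.of_forall fun t ht => ?_) ((hii hvc a b ha.le (ha.le.trans hb)).const_mul M)
    have ht' : t ∈ Ici (0:ℝ) := (ha.trans ht.1).le
    rw [Real.norm_eq_abs, abs_mul, abs_of_pos (hvpos t ht'), mul_comm]
    exact mul_le_mul_of_nonneg_right (hM t ht') (hvpos t ht').le
  -- integral of F / v^2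
  have hFv : ContinuousOn (fun τ => ((v τ)^2)⁻¹ * F τ) (Ici 0) := hv2c.mul hFc
  have hinv : ∀ a b : ℝ, 0 < a → a ≤ b →
      ∫ t in a..b, ((v t)^2)⁻¹ * F t = (v b)⁻¹ - (v a)⁻¹ := by
    intro a b ha hab
    refine intervalIntegral.integral_eq_sub_of_hasDerivAt (f := fun t => (v t)⁻¹)
      (fun x hx => ?_) (hii hFv a b ha.le (ha.le.trans hab))
    rw [uIcc_of_le hab] at hx
    have hx0 : 0 < x := ha.trans_le hx.1
    have := (hvd x hx0).fun_inv (hvpos x hx0.le).ne'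
    rw [neg_neg, div_eq_inv_mul] at this
    exact this
  have hanti : ∀ a b : ℝ, 0 < a → a ≤ b → v b ≤ v a := by
    intro a b ha hab
    have h : 0 ≤ ∫ t in a..b, ((v t)^2)⁻¹ * F t :=
      intervalIntegral.integral_nonneg hab fun t ht =>
        mul_nonneg (by positivity) (hFpos t (ha.trans_le ht.1)).le
    rw [hinv a b ha hab] at h
    exact (inv_le_inv₀ (hvpos a ha.le) (hvpos b (ha.le.trans hab))).1 (by linarith)
  have hv0 : Tendsto v atTop (nhds 0) := by
    have t1 : Tendsto (fun t => w t - w (t - 1)) atTop (nhds (1 - 1)) :=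
      hw1.sub (hw1.comp (tendsto_atTop_add_const_right atTop (-1) tendsto_id))
    rw [sub_self] at t1
    refine tendsto_of_tendsto_of_tendsto_of_le_of_le' tendsto_const_nhds t1 ?_ ?_
    · filter_upwards [eventually_ge_atTop 0] with t ht
      exact (hvpos t ht).le
    · filter_upwards [eventually_gt_atTop 1] with t ht
      rw [← hwint (t-1) t (by linarith) (by linarith)]
      have : ∫ s in (t-1)..t, v t ≤ ∫ s in (t-1)..t, v s := by
        refine intervalIntegral.integral_mono_on (by linarith) (by simp)
          (hii hvc _ _ (by linarith) (by linarith)) fun x hx => ?_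
        exact hanti x t (by linarith [hx.1]) hx.2
      simpa using this
  constructor
  · rintro ⟨B, hB⟩
    by_contra hLne
    have hB0 : 0 ≤ B := (abs_nonneg _).trans (hB 0 (by simp))
    have hLpos : 0 < |L| := abs_pos.2 hLne
    set ε : ℝ := |L| / (4 * (B + 1)) with hε
    have hεpos : 0 < ε := by positivity
    have e1 : ∀ᶠ t in atTop, F t < ε := hF0.eventually (gt_mem_nhds hεpos)
    have e2 : ∀ᶠ t in atTop, L^2/2 < L * Q t := by
      have : Tendsto (fun t => L * Q t) atTop (nhds (L * L)) := hQL.const_mul L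
      refine this.eventually (lt_mem_nhds ?_)
      have : 0 < L^2 := by positivity
      nlinarith
    obtain ⟨T, hT⟩ := eventually_atTop.1 ((e1.and e2).and (eventually_gt_atTop 0))
    have hT0 : 0 < T := (hT T le_rfl).2
    set K : ℝ := 2 * |L| * (B+1) with hK
    have hKε : K * ε = L^2/2 := by
      rw [hK, hε, ← sq_abs L]; field_simp; ring
    have key : ∀ t, T ≤ t → v t * (L * I T) + K * (1 - v t * (v T)⁻¹) ≤ |L| * B := by
      intro t ht
      have ht0 : 0 < t := hT0.trans_le ht
      have hvt := hvpos t ht0.le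
      have h1 : ∫ s in T..t, K * (((v s)^2)⁻¹ * F s) ≤ ∫ s in T..t, L * (((v s)^2)⁻¹ * Q s) := by
        refine intervalIntegral.integral_mono_on ht
          ((hii hFv _ _ hT0.le ht0.le).const_mul K) ((hii hgc _ _ hT0.le ht0.le).const_mul L)
          fun x hx => ?_
        obtain ⟨⟨h1, h2⟩, h3⟩ := hT x hx.1
        have hp : 0 < ((v x)^2)⁻¹ := by have := hvpos x h3.le; positivity
        have hKpos : 0 < K := by positivity
        have : K * F x ≤ L * Q x := by nlinarith
        nlinarith
      rw [intervalIntegral.integral_const_mul, intervalIntegral.integral_const_mul,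
        hinv T t hT0 ht, ← hIsub T t hT0.le ht0.le] at h1
      have h2 : L * (v t * I t) ≤ |L| * B := by
        refine (le_abs_self _).trans ?_
        rw [abs_mul]
        exact mul_le_mul_of_nonneg_left (hB t ht0.le) hLpos.le
      have h3 := mul_le_mul_of_nonneg_left h1 hvt.le
      have h4 : v t * (v t)⁻¹ = 1 := mul_inv_cancel₀ hvt.ne'
      have h5 : v t * (K * ((v t)⁻¹ - (v T)⁻¹)) = K * (1 - v t * (v T)⁻¹) := by
        rw [← h4]; ring
      rw [h5] at h3
      linarith
    have lim : Tendsto (fun t => v t * (L * I T) + K * (1 - v t * (v T)⁻¹)) atTop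
        (nhds (0 * (L * I T) + K * (1 - 0 * (v T)⁻¹))) :=
      (hv0.mul_const _).add (((hv0.mul_const _).const_sub 1).const_mul K)
    have hfin := le_of_tendsto lim (eventually_atTop.2 ⟨T, key⟩)
    have : K ≤ |L| * B := by simpa using hfin
    rw [hK] at this
    nlinarith
  · intro hL0
    obtain ⟨T, hT⟩ := eventually_atTop.1 (hFC.and (eventually_gt_atTop 0))
    have hT0 : 0 < T := (hT T le_rfl).2
    have hpc : ContinuousOn (fun t => v t * I t) (Icc 0 T) :=
      (hvc.mul hIc).mono Icc_subset_Ici_self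
    obtain ⟨B1, hB1⟩ := isCompact_Icc.exists_bound_of_continuousOn hpc
    refine ⟨max B1 (v T * |I T| + M * C), fun t ht => ?_⟩
    rcases le_total t T with h | h
    · exact (hB1 t ⟨ht, h⟩).trans (le_max_left _ _)
    · refine le_trans ?_ (le_max_right _ _)
      change |v t * I t| ≤ _
      have ht0 : 0 < t := hT0.trans_le h
      have hvt := hvpos t ht0.le
      have h1 : |I t - I T| ≤ M * C * ((v t)⁻¹ - (v T)⁻¹) := by
        rw [hIsub T t hT0.le ht0.le, ← hinv T t hT0 h, ← intervalIntegral.integral_const_mul,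
          ← Real.norm_eq_abs]
        refine intervalIntegral.norm_integral_le_of_norm_le h
          (Eventually.of_forall fun x hx => ?_) ((hii hFv _ _ hT0.le ht0.le).const_mul _)
        obtain ⟨h2, h3⟩ := hT x hx.1.le
        have hp : 0 < ((v x)^2)⁻¹ := by have := hvpos x h3.le; positivity
        have h4 := htail x h3
        rw [hL0, zero_sub, abs_neg] at h4
        rw [Real.norm_eq_abs, abs_mul, abs_of_pos hp]
        have h5 : |Q x| ≤ M * (C * F x) := h4.trans (mul_le_mul_of_nonneg_left h2 hM0)
        calc ((v x)^2)⁻¹ * |Q x| ≤ ((v x)^2)⁻¹ * (M * (C * F x)) :=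
              mul_le_mul_of_nonneg_left h5 hp.le
          _ = _ := by ring
      have h6 : |I t| ≤ |I T| + M * C * (v t)⁻¹ := by
        have a1 := abs_sub_abs_le_abs_sub (I t) (I T)
        have a2 : 0 ≤ M * C * (v T)⁻¹ := by have := hvpos T hT0.le; positivity
        linarith
      rw [abs_mul, abs_of_pos hvt]
      calc v t * |I t| ≤ v t * (|I T| + M * C * (v t)⁻¹) := mul_le_mul_of_nonneg_left h6 hvt.le
        _ = v t * |I T| + M * C := by field_simp
        _ ≤ _ := by
          have := mul_le_mul_of_nonneg_right (hanti T t hT0 h) (abs_nonneg (I T))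
          linarith

/-- For bounded continuous `q`, the variation-of-parameters solution
`p` of `p'' + f'(w)p = q`, `p(0) = p'(0) = 0` is bounded on `[0,∞)` if and only if
`∫₀^∞ q w' dt = 0`. -/
theorem bounded_iff_orthogonal (f w : ℝ → ℝ) (hf : Monostable f)
    (hw : IsHeteroclinic f w) (q : ℝ → ℝ) (hq : ContinuousOn q (Set.Ici 0))
    (hqb : ∃ M : ℝ, ∀ t ∈ Set.Ici (0 : ℝ), |q t| ≤ M) :
    let w' := derivWithin w (Set.Ici 0)
    let p : ℝ → ℝ := fun t =>
      w' t * ∫ τ in (0 : ℝ)..t, ((w' τ) ^ 2)⁻¹ * ∫ s in (0 : ℝ)..τ, w' s * q s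
    (∃ M : ℝ, ∀ t ∈ Set.Ici (0 : ℝ), |p t| ≤ M) ↔
      (∫ t in Set.Ioi (0 : ℝ), q t * w' t) = 0 := by
  intro w' p
  obtain ⟨hfs, hf0, hf1, hfpos, hfd⟩ := hf
  obtain ⟨hwC, hode, hw0, hw1, hwpos, hwmono, hvpos⟩ := hw
  obtain ⟨M, hM⟩ := hqb
  have hu : UniqueDiffOn ℝ (Ici (0:ℝ)) := uniqueDiffOn_Ici 0
  have hvC : ContDiffOn ℝ 1 w' (Ici 0) := hwC.derivWithin hu (by norm_num)
  have hwd : ∀ t, 0 < t → HasDerivAt w (w' t) t := fun t ht =>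
    ((hwC.differentiableOn (by norm_num) t ht.le).hasDerivWithinAt).hasDerivAt (Ici_mem_nhds ht)
  have hvd : ∀ t, 0 < t → HasDerivAt w' (-(f (w t))) t := by
    intro t ht
    have h := ((hvC.differentiableOn (by norm_num) t ht.le).hasDerivWithinAt).hasDerivAt
      (Ici_mem_nhds ht)
    have h2 : derivWithin w' (Ici 0) t + f (w t) = 0 := hode t ht
    rwa [eq_neg_of_add_eq_zero_left h2] at h
  have hwlt : ∀ t, 0 ≤ t → w t < 1 := by
    intro t ht
    refine lt_of_lt_of_le (hwmono ht (by simp; linarith : t + 1 ∈ Ici (0:ℝ)) (by linarith)) ?_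
    refine ge_of_tendsto hw1 ?_
    filter_upwards [eventually_ge_atTop (t+1)] with b hb
    exact hwmono.monotoneOn (by simp; linarith : t + 1 ∈ Ici (0:ℝ))
      (by simp; linarith : b ∈ Ici (0:ℝ)) hb
  have hfc : Continuous f := hfs.continuous
  have hFt : Tendsto (fun t => f (w t)) atTop (nhds 0) := by
    have := (hfc.tendsto 1).comp hw1
    rwa [hf1] at this
  have hdf : HasDerivAt f (deriv f 1) 1 := (hfs.differentiable (by simp) 1).hasDerivAt
  have hsl := hasDerivAt_iff_tendsto_slope.1 hdf
  have hev : ∀ᶠ s in nhdsWithin (1:ℝ) {1}ᶜ, slope f 1 s < deriv f 1 / 2 :=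
    hsl.eventually (gt_mem_nhds (by linarith))
  have hw1' : Tendsto w atTop (nhdsWithin (1:ℝ) {1}ᶜ) := by
    refine tendsto_nhdsWithin_iff.2 ⟨hw1, ?_⟩
    filter_upwards [eventually_ge_atTop 0] with t ht
    exact (hwlt t ht).ne
  refine aux_core w w' (fun t => f (w t)) q hwC.continuousOn hvC.continuousOn hvpos hwd hvd
    (fun t ht => hfpos _ ⟨hwpos t ht, hwlt t ht.le⟩)
    (hfc.comp_continuousOn hwC.continuousOn) hw1 hFt ((-(deriv f 1 / 2))⁻¹)
    (inv_pos.2 (by linarith)) ?_ hq M hM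
  filter_upwards [hw1'.eventually hev, eventually_ge_atTop 0] with t ht ht0
  have h1 := hwlt t ht0
  rw [slope_def_field, hf1, sub_zero, div_lt_iff_of_neg (by linarith)] at ht
  rw [inv_mul_eq_div, le_div_iff₀ (by linarith)]
  linarith
end

section
/- Let f be a monostable nonlinearity and w the associated heteroclinic. Then the problem p'' + f'(w(t)) p = −w'(t) on (0,∞) with p(0) = 0 has a unique bounded solution, given explicitly by p₀(t) = w'(t) · ∫₀^t (1/w'(τ)²) ( ∫_τ^∞ w'(s)² ds ) dτ; moreover p₀'(0) = ( ∫₀^∞ w'(t)² dt ) / w'(0) > 0. -/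
open Set Filter MeasureTheory

/-- `p` is a bounded `C²` solution of `p'' + f'(w(t)) p = -w'(t)` on `(0,∞)`
with `p(0) = 0`. -/
def IsBddSol (f w p : ℝ → ℝ) : Prop :=
  ContDiffOn ℝ 2 p (Set.Ici 0) ∧
  (∀ t ∈ Set.Ioi (0 : ℝ),
    derivWithin (derivWithin p (Set.Ici 0)) (Set.Ici 0) t + deriv f (w t) * p t
      = -(derivWithin w (Set.Ici 0) t)) ∧
  p 0 = 0 ∧
  (∃ M : ℝ, ∀ t ∈ Set.Ici (0 : ℝ), |p t| ≤ M)

namespace UBS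

lemma mono_of {F F' : ℝ → ℝ} {a : ℝ} (ha : 0 ≤ a)
    (h : ∀ t, 0 ≤ t → HasDerivWithinAt F (F' t) (Ici 0) t)
    (h0 : ∀ t, a ≤ t → 0 ≤ F' t) : MonotoneOn F (Ici a) := by
  refine monotoneOn_of_hasDerivWithinAt_nonneg (f' := F') (convex_Ici a) ?_ ?_ ?_
  · intro t ht
    exact ((h t (ha.trans ht)).continuousWithinAt).mono (Ici_subset_Ici.2 ha)
  · intro t ht
    rw [interior_Ici] at *
    have : a < t := ht
    exact (h t (ha.trans this.le)).mono (fun x hx => ha.trans (le_of_lt hx))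
  · intro t ht
    rw [interior_Ici] at ht
    exact h0 t (le_of_lt ht)

lemma contDiffOn_of {F F' : ℝ → ℝ}
    (h : ∀ t, 0 ≤ t → HasDerivWithinAt F (F' t) (Ici 0) t) {n : ℕ}
    (hc : ContDiffOn ℝ n F' (Ici 0)) : ContDiffOn ℝ (n + 1 : ℕ) F (Ici 0) := by
  have := (contDiffOn_succ_iff_derivWithin (𝕜 := ℝ) (n := n) (f := F) (uniqueDiffOn_Ici 0)).2
    ⟨fun t ht => (h t ht).differentiableWithinAt, by simp, hc.congr fun t ht =>
      (h t ht).derivWithin (uniqueDiffOn_Ici (0 : ℝ) t ht)⟩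
  exact_mod_cast this

lemma ftc {g : ℝ → ℝ} (hg : ContinuousOn g (Ici 0)) (t : ℝ) (ht : 0 ≤ t) :
    HasDerivWithinAt (fun t => ∫ s in (0 : ℝ)..t, g s) (g t) (Ici 0) t := by
  have hc : Continuous fun s => g (max s 0) :=
    hg.comp_continuous (by fun_prop) (fun s => mem_Ici.2 (le_max_right _ _))
  have h1 := (hc.integral_hasStrictDerivAt 0 t).hasDerivAt.hasDerivWithinAt (s := Ici 0)
  have h2 : g (max t 0) = g t := by rw [max_eq_left ht]
  rw [h2] at h1
  have key : ∀ x ∈ Ici (0 : ℝ), (∫ s in (0 : ℝ)..x, g s) = ∫ s in (0 : ℝ)..x, g (max s 0) := by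
    intro x hx
    apply intervalIntegral.integral_congr
    intro s hs
    rw [uIcc_of_le hx] at hs
    simp only [max_eq_left hs.1]
  exact h1.congr key (key t ht)

/-- Blow-up argument. -/
lemma blowup {u R : ℝ → ℝ} (hu : ∀ t, 0 ≤ t → 0 < u t)
    (hR : ∀ t, 0 ≤ t → HasDerivWithinAt R ((u t ^ 2)⁻¹) (Ici 0) t) (hR0 : R 0 = 0)
    (M : ℝ) (hM : ∀ t, 0 ≤ t → |u t * R t| ≤ M) : False := by
  have hpos : ∀ t, 0 < t → 0 < R t := by
    have : StrictMonoOn R (Ici 0) := by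
      refine strictMonoOn_of_hasDerivWithinAt_pos (f' := fun t => (u t ^ 2)⁻¹) (convex_Ici 0)
        (fun t ht => (hR t ht).continuousWithinAt) ?_ ?_
      · intro t ht
        exact (hR t (interior_subset ht)).mono interior_subset
      · intro t ht
        have := hu t (interior_subset ht)
        positivity
    intro t ht
    have := this (mem_Ici.2 le_rfl) (mem_Ici.2 ht.le) ht
    rwa [hR0] at this
  have hM0 : 0 < M := lt_of_lt_of_le
    (abs_pos.2 (mul_pos (hu 1 zero_le_one) (hpos 1 one_pos)).ne') (hM 1 zero_le_one)
  have hmono : MonotoneOn (fun t => - (R t)⁻¹ - t / M ^ 2) (Ici 1) := by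
    refine monotoneOn_of_hasDerivWithinAt_nonneg
      (f' := fun t => - (-(u t ^ 2)⁻¹ / R t ^ 2) - 1 / M ^ 2) (convex_Ici 1) ?_ ?_ ?_
    · intro t ht
      have h1 : (1 : ℝ) ≤ t := ht
      have h2 := ((hR t (by linarith)).continuousWithinAt).mono
        (Ici_subset_Ici.2 (zero_le_one (α := ℝ)))
      have h3 := (hpos t (by linarith)).ne'
      exact ((h2.inv₀ h3).neg).sub (by fun_prop)
    · intro t ht
      rw [interior_Ici] at *
      have h1 : (1 : ℝ) < t := ht
      have h2 := (hR t (by linarith)).mono (t := Ici 0) (s := Ioi 1)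
        (fun x hx => (zero_le_one.trans (le_of_lt hx)))
      exact ((h2.inv (hpos t (by linarith)).ne').neg).sub
        ((hasDerivWithinAt_id t _).div_const _)
    · intro t ht
      rw [interior_Ici] at ht
      have h1 : (1 : ℝ) < t := ht
      have hr := hpos t (by linarith)
      have hut := hu t (by linarith)
      have hb := hM t (by linarith)
      rw [abs_of_pos (mul_pos hut hr)] at hb
      have : 1 / M ^ 2 ≤ 1 / (u t * R t) ^ 2 := by
        apply one_div_le_one_div_of_le (by positivity)
        gcongr
      have e : - (-(u t ^ 2)⁻¹ / R t ^ 2) = 1 / (u t * R t) ^ 2 := by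
        field_simp
      rw [e]; linarith
  have hT : (1 : ℝ) ≤ 1 + M ^ 2 * (R 1)⁻¹ := by
    have := hpos 1 one_pos
    have : 0 ≤ M ^ 2 * (R 1)⁻¹ := by positivity
    linarith
  have h := hmono (mem_Ici.2 le_rfl) (mem_Ici.2 hT) hT
  have hp := inv_pos.2 (hpos (1 + M ^ 2 * (R 1)⁻¹) (by linarith))
  have e : (1 + M ^ 2 * (R 1)⁻¹) / M ^ 2 = 1 / M ^ 2 + (R 1)⁻¹ := by
    field_simp
  simp only [e] at h
  linarith

/-- Comparison of the distance to the limit with the derivative. -/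
lemma ratio {f w u : ℝ → ℝ} (hfd : ∃ d < 0, HasDerivAt f d 1) (hf1 : f 1 = 0)
    (hw : ∀ t, 0 ≤ t → HasDerivWithinAt w (u t) (Ici 0) t)
    (hu : ∀ t, 0 ≤ t → HasDerivWithinAt u (-f (w t)) (Ici 0) t)
    (hupos : ∀ t, 0 ≤ t → 0 < u t) (hanti : AntitoneOn u (Ici 0))
    (hw0 : ∀ t, 0 ≤ t → 0 ≤ w t) (hw1 : ∀ t, 0 ≤ t → w t < 1)
    (hlim : Tendsto w atTop (nhds 1)) (hulim : Tendsto u atTop (nhds 0)) :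
    ∃ K, 0 < K ∧ ∀ t, 0 ≤ t → 1 - w t ≤ K * u t := by
  obtain ⟨d, hd, hfd⟩ := hfd
  have hev : ∀ᶠ s in nhds (1 : ℝ), |f s - d * (s - 1)| ≤ (-d / 2) * |s - 1| := by
    have := (hasDerivAt_iff_isLittleO.1 hfd).def (c := -d / 2) (by linarith)
    filter_upwards [this] with s hs
    rw [hf1] at hs
    simpa [mul_comm] using hs
  obtain ⟨T, hT⟩ := eventually_atTop.1 ((hlim.eventually hev).and (eventually_ge_atTop 0))
  have hT0 : 0 ≤ T := (hT T le_rfl).2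
  set c := -d / 2 with hc
  have hcpos : 0 < c := by rw [hc]; linarith
  have hfl : ∀ t, T ≤ t → c * (1 - w t) ≤ f (w t) := by
    intro t ht
    have h1 := (hT t ht).1
    have h2 := hw1 t (hT0.trans ht)
    rw [abs_of_neg (show w t - 1 < 0 by linarith)] at h1
    have := (abs_le.1 h1).1
    rw [hc] at *
    nlinarith
  have hmono : MonotoneOn (fun t => c * (1 - w t) ^ 2 - u t ^ 2) (Ici T) := by
    refine mono_of (F' := fun t => 2 * u t * (f (w t) - c * (1 - w t))) hT0 ?_ ?_
    · intro t ht
      have := (((((hw t ht).const_sub 1)).pow 2).const_mul c).sub ((hu t ht).pow 2)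
      refine this.congr_deriv ?_
      simp; ring
    · intro t ht
      have := hfl t ht
      have := hupos t (hT0.trans ht)
      have : 0 ≤ f (w t) - c * (1 - w t) := by linarith
      positivity
  have hl : Tendsto (fun t => c * (1 - w t) ^ 2 - u t ^ 2) atTop (nhds 0) := by
    have := (((hlim.const_sub 1).pow 2).const_mul c).sub (hulim.pow 2)
    simpa using this
  have hneg : ∀ t, T ≤ t → c * (1 - w t) ^ 2 ≤ u t ^ 2 := by
    intro t ht
    have : c * (1 - w t) ^ 2 - u t ^ 2 ≤ 0 := by
      refine ge_of_tendsto hl ?_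
      filter_upwards [eventually_ge_atTop t] with s hs
      exact hmono (mem_Ici.2 ht) (mem_Ici.2 (ht.trans hs)) hs
    linarith
  have huT := hupos T hT0
  have hsc := Real.sqrt_pos.2 hcpos
  refine ⟨(√c)⁻¹ + (u T)⁻¹, by positivity, ?_⟩
  intro t ht
  have hut := hupos t ht
  rcases le_total T t with h | h
  · have h1 := hneg t h
    have h2 : √c * (1 - w t) ≤ u t := by
      apply le_of_sq_le_sq _ hut.le
      rw [mul_pow, Real.sq_sqrt hcpos.le]; exact h1
    have h3 : 1 - w t ≤ (√c)⁻¹ * u t := by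
      rw [inv_mul_eq_div, le_div_iff₀ hsc]; linarith
    have : 0 ≤ (u T)⁻¹ * u t := by positivity
    linarith
  · have h1 := hanti (mem_Ici.2 ht) (mem_Ici.2 hT0) h
    have h3 : 1 ≤ (u T)⁻¹ * u t := by
      rw [inv_mul_eq_div, le_div_iff₀ huT]; linarith
    have : 0 ≤ (√c)⁻¹ * u t := by positivity
    have := hw0 t ht
    linarith

end UBS

open UBS

theorem unique_bounded_solution (f w : ℝ → ℝ) (hf : Monostable f)
    (hw : IsHeteroclinic f w) :
    let w' := derivWithin w (Set.Ici 0)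
    let p₀ : ℝ → ℝ := fun t =>
      w' t * ∫ τ in (0 : ℝ)..t, ((w' τ) ^ 2)⁻¹ * ∫ s in Set.Ioi τ, (w' s) ^ 2
    IsBddSol f w p₀ ∧
    (∀ p : ℝ → ℝ, IsBddSol f w p → Set.EqOn p p₀ (Set.Ici 0)) ∧
    derivWithin p₀ (Set.Ici 0) 0 = (∫ t in Set.Ioi (0 : ℝ), (w' t) ^ 2) / w' 0 ∧
    0 < derivWithin p₀ (Set.Ici 0) 0 := by
  obtain ⟨hfs, hf0, hf1, hfpos, hfd1⟩ := hf
  obtain ⟨hwC, hwode, hw0, hwlim, hwpos, hwmono, hupos⟩ := hw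
  intro u p₀
  have hUD := uniqueDiffOn_Ici (0 : ℝ)
  have hfC : ∀ n : ℕ, ContDiff ℝ n f := fun n => hfs.of_le (by exact_mod_cast le_top)
  have hfd : ∀ x, HasDerivAt f (deriv f x) x := fun x =>
    (((hfC 1).differentiable (by simp)) x).hasDerivAt
  have hfcont : Continuous f := (hfC 0).continuous
  replace hupos : ∀ t, 0 ≤ t → 0 < u t := hupos
  -- general derivative facts for C² functions
  have hC2 : ∀ p : ℝ → ℝ, ContDiffOn ℝ 2 p (Ici 0) →
      (∀ t, 0 ≤ t → HasDerivWithinAt p (derivWithin p (Ici 0) t) (Ici 0) t) ∧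
      (∀ t, 0 ≤ t → HasDerivWithinAt (derivWithin p (Ici 0))
        (derivWithin (derivWithin p (Ici 0)) (Ici 0) t) (Ici 0) t) ∧
      ContinuousOn (derivWithin (derivWithin p (Ici 0)) (Ici 0)) (Ici 0) := by
    intro p hp
    have h1 : ContDiffOn ℝ 1 (derivWithin p (Ici 0)) (Ici 0) :=
      hp.derivWithin hUD (by norm_num)
    refine ⟨fun t ht => ((hp.differentiableOn (by norm_num)) t ht).hasDerivWithinAt,
      fun t ht => ((h1.differentiableOn (by norm_num)) t ht).hasDerivWithinAt,
      h1.continuousOn_derivWithin hUD (by norm_num)⟩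
  obtain ⟨hwd, hud', hu'c⟩ := hC2 w hwC
  have hext : ∀ g h : ℝ → ℝ, ContinuousOn g (Ici 0) → ContinuousOn h (Ici 0) →
      (∀ t, 0 < t → g t = h t) → ∀ t, 0 ≤ t → g t = h t := by
    intro g h hg hh he t ht
    exact Set.EqOn.of_subset_closure (s := Ioi 0) (t := Ici 0) (fun x hx => he x hx) hg hh
      Ioi_subset_Ici_self (by rw [closure_Ioi]) ht
  have hwc : ContinuousOn w (Ici 0) := hwC.continuousOn
  have hud : ∀ t, 0 ≤ t → HasDerivWithinAt u (-f (w t)) (Ici 0) t := by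
    intro t ht
    have := hext _ (fun t => -f (w t)) hu'c (hfcont.comp_continuousOn hwc).neg
      (fun t ht => by have := hwode t ht; linarith) t ht
    rw [← this]; exact hud' t ht
  have huc : ContinuousOn u (Ici 0) := fun t ht => (hud t ht).continuousWithinAt
  have hudd : ∀ t, 0 ≤ t →
      HasDerivWithinAt (fun t => -f (w t)) (-(deriv f (w t) * u t)) (Ici 0) t := by
    intro t ht
    exact ((hfd (w t)).comp_hasDerivWithinAt t (hwd t ht)).neg
  have hwC2 : ContDiffOn ℝ 2 (fun t => -f (w t)) (Ici 0) :=
    ((hfC 2).comp_contDiffOn hwC).neg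
  have huC : ContDiffOn ℝ 2 u (Ici 0) := by
    have := contDiffOn_of (n := 1) hud (hwC2.of_le (by norm_num))
    exact_mod_cast this
  have hwge : ∀ t, 0 ≤ t → 0 ≤ w t := by
    intro t ht
    rcases ht.eq_or_lt with h | h
    · rw [← h, hw0]
    · exact (hwpos t h).le
  have hwlt : ∀ t, 0 ≤ t → w t < 1 := by
    intro t ht
    have h1 : w t < w (t + 1) := hwmono ht (mem_Ici.2 (by linarith)) (by linarith)
    refine h1.trans_le (ge_of_tendsto hwlim ?_)
    filter_upwards [eventually_ge_atTop (t + 1)] with s hs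
    exact hwmono.monotoneOn (mem_Ici.2 (by linarith)) (mem_Ici.2 (by linarith)) hs
  have hfw : ∀ t, 0 ≤ t → 0 ≤ f (w t) := by
    intro t ht
    rcases (hwge t ht).eq_or_lt with h | h
    · rw [← h, hf0]
    · exact (hfpos _ ⟨h, hwlt t ht⟩).le
  have hanti : AntitoneOn u (Ici 0) := by
    have := mono_of (F := fun t => - u t) (F' := fun t => -(-f (w t))) le_rfl
      (fun t ht => (hud t ht).neg) (fun t ht => by simpa using hfw t ht)
    intro a ha b hb hab
    have := this ha hb hab
    simpa using this
  have htu : ∀ t, 0 ≤ t → t * u t ≤ w t := by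
    have := mono_of (F := fun t => w t - t * u t)
      (F' := fun t => u t - (1 * u t + t * (-f (w t)))) le_rfl
      (fun t ht => (hwd t ht).sub ((hasDerivWithinAt_id t _).mul (hud t ht)))
      (fun t ht => by have := mul_nonneg ht (hfw t ht); linarith)
    intro t ht
    have h := this (mem_Ici.2 le_rfl) (mem_Ici.2 ht) ht
    simp only [hw0] at h
    linarith
  have hulim : Tendsto u atTop (nhds 0) := by
    refine tendsto_of_tendsto_of_tendsto_of_le_of_le' tendsto_const_nhds tendsto_inv_atTop_zero
      ?_ ?_
    · filter_upwards [eventually_ge_atTop 0] with t ht using (hupos t ht).le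
    · filter_upwards [eventually_gt_atTop 0] with t ht
      rw [← one_div, le_div_iff₀ ht]
      have := htu t ht.le
      have := hwlt t ht.le
      linarith
  obtain ⟨K, hK, hKu⟩ := ratio ⟨_, hfd1, hfd 1⟩ hf1 hwd hud hupos hanti hwge hwlt hwlim hulim
  -- integrability
  have hwda : ∀ t, 0 < t → HasDerivAt w (u t) t := fun t ht =>
    (hwd t ht.le).hasDerivAt (Ici_mem_nhds ht)
  have hwcw : ∀ τ, 0 ≤ τ → ContinuousWithinAt w (Ici τ) τ := fun τ hτ =>
    (hwc τ hτ).mono (Ici_subset_Ici.2 hτ)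
  have huint : ∀ τ, 0 ≤ τ → IntegrableOn u (Ioi τ) := fun τ hτ =>
    integrableOn_Ioi_deriv_of_nonneg (hwcw τ hτ)
      (fun x hx => hwda x (hτ.trans_lt hx)) (fun x hx => (hupos x (hτ.trans hx.le)).le) hwlim
  have huI : ∀ τ, 0 ≤ τ → ∫ s in Ioi τ, u s = 1 - w τ := fun τ hτ =>
    integral_Ioi_of_hasDerivAt_of_nonneg (hwcw τ hτ)
      (fun x hx => hwda x (hτ.trans_lt hx)) (fun x hx => (hupos x (hτ.trans hx.le)).le) hwlim
  have hu2le : ∀ τ, 0 ≤ τ → ∀ s ∈ Ioi τ, u s ^ 2 ≤ u τ * u s := by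
    intro τ hτ s hs
    have hs' : τ < s := hs
    have h1 := hanti (mem_Ici.2 hτ) (mem_Ici.2 (hτ.trans hs'.le)) hs'.le
    have h2 := hupos s (hτ.trans hs'.le)
    nlinarith
  have hu2int : ∀ τ, 0 ≤ τ → IntegrableOn (fun s => u s ^ 2) (Ioi τ) := by
    intro τ hτ
    refine Integrable.mono' ((huint τ hτ).const_mul (u τ)) ?_ ?_
    · exact ((huc.pow 2).mono (fun x hx => hτ.trans (le_of_lt hx))).aestronglyMeasurable
        measurableSet_Ioi
    · refine (ae_restrict_iff' measurableSet_Ioi).2 (Eventually.of_forall fun s hs => ?_)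
      rw [Real.norm_of_nonneg (sq_nonneg _)]
      exact hu2le τ hτ s hs
  set A : ℝ → ℝ := fun τ => ∫ s in Ioi τ, u s ^ 2 with hA
  have hAle : ∀ τ, 0 ≤ τ → A τ ≤ K * u τ ^ 2 := by
    intro τ hτ
    have h1 : A τ ≤ ∫ s in Ioi τ, u τ * u s :=
      setIntegral_mono_on (hu2int τ hτ) ((huint τ hτ).const_mul _) measurableSet_Ioi
        (hu2le τ hτ)
    rw [integral_const_mul, huI τ hτ] at h1
    have h2 := hKu τ hτ
    have h3 := hupos τ hτ
    nlinarith
  have hAnn : ∀ τ, 0 ≤ A τ := fun τ => integral_nonneg fun s => sq_nonneg _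
  have hA0 : 0 < A 0 := by
    rw [hA]
    refine (setIntegral_pos_iff_support_of_nonneg_ae
      (Eventually.of_forall fun s => sq_nonneg _) (hu2int 0 le_rfl)).2 ?_
    have : Ioi (0:ℝ) ⊆ Function.support (fun s => u s ^ 2) ∩ Ioi 0 := fun s hs =>
      ⟨(pow_pos (hupos s (le_of_lt hs)) 2).ne', hs⟩
    refine lt_of_lt_of_le ?_ (measure_mono this)
    simp
  have hAd : ∀ t, 0 ≤ t → HasDerivWithinAt A (-(u t ^ 2)) (Ici 0) t := by
    have he : ∀ t ∈ Ici (0:ℝ), A t = A 0 - ∫ s in (0:ℝ)..t, u s ^ 2 := by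
      intro t ht
      have := intervalIntegral.integral_Ioi_sub_Ioi (hu2int 0 le_rfl) ht
      simp only [hA]
      linarith
    intro t ht
    exact ((ftc (huc.pow 2) t ht).const_sub (A 0)).congr he (he t ht)
  have hAC : ContDiffOn ℝ 1 A (Ici 0) := by
    have := contDiffOn_of (n := 0) hAd (by
      have : ContinuousOn (fun t => -(u t ^ 2)) (Ici 0) := (huc.pow 2).neg
      simpa using this)
    exact_mod_cast this
  set G : ℝ → ℝ := fun τ => (u τ ^ 2)⁻¹ * A τ with hG
  have hune : ∀ t ∈ Ici (0:ℝ), u t ^ 2 ≠ 0 := fun t ht => (pow_pos (hupos t ht) 2).ne'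
  have hGC : ContDiffOn ℝ 1 G (Ici 0) :=
    (((huC.of_le (by norm_num)).pow 2).inv hune).mul hAC
  set H : ℝ → ℝ := fun t => ∫ τ in (0:ℝ)..t, G τ with hH
  have hHd : ∀ t, 0 ≤ t → HasDerivWithinAt H (G t) (Ici 0) t := ftc hGC.continuousOn
  have hHC : ContDiffOn ℝ 2 H (Ici 0) := by
    have := contDiffOn_of (n := 1) hHd (by exact_mod_cast hGC)
    exact_mod_cast this
  have hH0 : H 0 = 0 := by simp [hH]
  have hp₀ : p₀ = fun t => u t * H t := rfl
  clear_value p₀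
  have hp₀d : ∀ t, 0 ≤ t → HasDerivWithinAt p₀ (-f (w t) * H t + A t / u t) (Ici 0) t := by
    intro t ht
    rw [hp₀]
    refine ((hud t ht).mul (hHd t ht)).congr_deriv ?_
    have := (hupos t ht).ne'
    simp only [hG]
    field_simp
  have hp₀dw : ∀ t ∈ Ici (0:ℝ), derivWithin p₀ (Ici 0) t = -f (w t) * H t + A t / u t :=
    fun t ht => (hp₀d t ht).derivWithin (hUD t ht)
  have hp₀dd : ∀ t, 0 ≤ t → HasDerivWithinAt (derivWithin p₀ (Ici 0))
      (-(deriv f (w t) * p₀ t) - u t) (Ici 0) t := by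
    intro t ht
    have hne := (hupos t ht).ne'
    have := ((hudd t ht).mul (hHd t ht)).add ((hAd t ht).div (hud t ht) hne)
    refine (this.congr hp₀dw (hp₀dw t ht)).congr_deriv ?_
    simp only [hG, hp₀]
    field_simp
    ring
  have hHle : ∀ t, 0 ≤ t → H t ≤ K * t := by
    have := mono_of (F := fun t => K * t - H t) (F' := fun t => K * 1 - G t) le_rfl
      (fun t ht => ((hasDerivWithinAt_id t _).const_mul K).sub (hHd t ht))
      (fun t ht => by
        have h1 := hAle t ht
        have h2 := pow_pos (hupos t ht) 2
        have : G t ≤ K := by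
          simp only [hG]
          rw [inv_mul_eq_div, div_le_iff₀ h2]; exact h1
        linarith)
    intro t ht
    have h := this (mem_Ici.2 le_rfl) (mem_Ici.2 ht) ht
    simp only [hH0] at h
    linarith
  have hHnn : ∀ t, 0 ≤ t → 0 ≤ H t := by
    have := mono_of (F := H) (F' := G) le_rfl hHd
      (fun t ht => mul_nonneg (inv_nonneg.2 (sq_nonneg _)) (hAnn t))
    intro t ht
    have h := this (mem_Ici.2 le_rfl) (mem_Ici.2 ht) ht
    rwa [hH0] at h
  have hp₀b : ∀ t, 0 ≤ t → |p₀ t| ≤ K := by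
    intro t ht
    have h1 := hupos t ht
    have h2 := hHnn t ht
    rw [hp₀]
    simp only
    rw [abs_of_nonneg (by positivity)]
    calc u t * H t ≤ u t * (K * t) := by gcongr; exact hHle t ht
      _ = K * (t * u t) := by ring
      _ ≤ K * 1 := by
        gcongr
        exact (htu t ht).trans (hwlt t ht).le
      _ = K := mul_one K
  have hd0 : derivWithin p₀ (Ici 0) 0 = A 0 / u 0 := by
    rw [hp₀dw 0 (mem_Ici.2 le_rfl), hH0]; ring
  refine ⟨⟨?_, ?_, ?_, K, hp₀b⟩, ?_, hd0, ?_⟩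
  · rw [hp₀]; exact huC.mul hHC
  · intro t ht
    rw [(hp₀dd t (le_of_lt ht)).derivWithin (hUD t (mem_Ici.2 (le_of_lt ht)))]
    change _ = - u t
    ring
  · simp [hp₀, hH0]
  · rintro p ⟨hpC, hpode, hp0, M, hpM⟩
    obtain ⟨hpd, hpdd', hp''c⟩ := hC2 p hpC
    set p' := derivWithin p (Ici 0) with hp'
    have hpdd : ∀ t, 0 ≤ t →
        HasDerivWithinAt p' (-(deriv f (w t) * p t) - u t) (Ici 0) t := by
      intro t ht
      have hf'c : Continuous (deriv f) := (hfC 1).continuous_deriv (by norm_num)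
      have := hext _ (fun t => -(deriv f (w t) * p t) - u t) hp''c
        (((hf'c.comp_continuousOn hwc).mul hpC.continuousOn).neg.sub huc)
        (fun t ht => by
          have : _ = - u t := hpode t ht
          linarith) t ht
      rw [← this]; exact hpdd' t ht
    set C := u 0 * p' 0 - A 0 with hCdef
    have hconst : ∀ F : ℝ → ℝ, (∀ t, 0 ≤ t → HasDerivWithinAt F 0 (Ici 0) t) →
        ∀ t, 0 ≤ t → F t = F 0 := by
      intro F hF t ht
      have h1 := mono_of (F' := fun _ => 0) le_rfl hF (fun _ _ => le_rfl)
        (mem_Ici.2 le_rfl) (mem_Ici.2 ht) ht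
      have h2 := mono_of (F := fun t => - F t) (F' := fun _ => -0) le_rfl
        (fun t ht => (hF t ht).neg) (fun _ _ => by simp)
        (mem_Ici.2 le_rfl) (mem_Ici.2 ht) ht
      simp only at h2
      linarith
    have hWr : ∀ t, 0 ≤ t → u t * p' t + f (w t) * p t - A t = C := by
      intro t ht
      have := hconst (fun t => u t * p' t - (-f (w t)) * p t - A t) (fun t ht => by
        have := (((hud t ht).mul (hpdd t ht)).sub ((hudd t ht).mul (hpd t ht))).sub (hAd t ht)
        refine this.congr_deriv ?_
        change _ + _ - (_ + -f (w t) * p' t) - _ = _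
        ring) t ht
      simp only [hp0] at this
      rw [hCdef]; linarith
    set Q : ℝ → ℝ := fun t => p t / u t - H t with hQ
    have hQd : ∀ t, 0 ≤ t → HasDerivWithinAt Q (C * (u t ^ 2)⁻¹) (Ici 0) t := by
      intro t ht
      have hne := (hupos t ht).ne'
      refine (((hpd t ht).div (hud t ht) hne).sub (hHd t ht)).congr_deriv ?_
      change (p' t * u t - _) / _ - _ = _
      rw [← hWr t ht]
      simp only [hG]
      field_simp
      ring
    have hQ0 : Q 0 = 0 := by simp [hQ, hp0, hH0]
    have huQ : ∀ t, 0 ≤ t → u t * Q t = p t - p₀ t := by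
      intro t ht
      have hne := (hupos t ht).ne'
      simp only [hQ, hp₀]
      field_simp
    have hC : C = 0 := by
      by_contra hC
      refine blowup (R := fun t => C⁻¹ * Q t) hupos (fun t ht => ?_) (by simp [hQ0])
        (|C⁻¹| * (M + K)) (fun t ht => ?_)
      · refine ((hQd t ht).const_mul C⁻¹).congr_deriv ?_
        rw [← mul_assoc, inv_mul_cancel₀ hC, one_mul]
      · rw [show u t * (C⁻¹ * Q t) = C⁻¹ * (u t * Q t) by ring, huQ t ht, abs_mul]
        gcongr
        exact (abs_sub _ _).trans (add_le_add (hpM t ht) (hp₀b t ht))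
    intro t ht
    have h1 := hconst Q (fun t ht => by simpa [hC] using hQd t ht) t ht
    have h2 := huQ t ht
    rw [h1, hQ0, mul_zero] at h2
    linarith
  · rw [hd0]; exact div_pos hA0 (hupos 0 le_rfl)
end

section
/- Let f be a monostable nonlinearity and w the associated heteroclinic, and let μ > 0. Then the problem p''(t) − μ p(t) + f'(w(t)) p(t) = −w'(t) on (0,∞) with p(0) = 0 has a unique bounded solution p; moreover p(t) > 0 for all t > 0, and p'(0) > 0. -/
open Set Filter

/-- `p` is a bounded `C²` solution of `p'' - μ p + f'(w(t)) p = -w'(t)` on `(0,∞)`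
with `p(0) = 0`. -/
def IsBddSolMu (f w : ℝ → ℝ) (μ : ℝ) (p : ℝ → ℝ) : Prop :=
  ContDiffOn ℝ 2 p (Set.Ici 0) ∧
  (∀ t ∈ Set.Ioi (0 : ℝ),
    derivWithin (derivWithin p (Set.Ici 0)) (Set.Ici 0) t - μ * p t + deriv f (w t) * p t
      = -(derivWithin w (Set.Ici 0) t)) ∧
  p 0 = 0 ∧
  (∃ M : ℝ, ∀ t ∈ Set.Ici (0 : ℝ), |p t| ≤ M)

open scoped BoundedContinuousFunction

lemma volterra_bound {E : Type*} [NormedAddCommGroup E] [NormedSpace ℝ E]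
    (A : ℝ → E →L[ℝ] E) (M : ℝ) (hM : 0 < M) (hAM : ∀ s, ‖A s‖ ≤ M)
    (Z : ℝ → E) (C : ℝ) (hZC : ∀ s, ‖Z s‖ ≤ C) (τ : ℝ) (hτ : 0 ≤ τ) :
    ‖Real.exp (-(2 * M) * τ) • ∫ s in (0:ℝ)..τ, Real.exp (2 * M * s) • A s (Z s)‖ ≤ C / 2 := by
  have hC : 0 ≤ C := (norm_nonneg _).trans (hZC 0)
  have h1 : ‖∫ s in (0:ℝ)..τ, Real.exp (2 * M * s) • A s (Z s)‖
      ≤ ∫ s in (0:ℝ)..τ, Real.exp (2 * M * s) * (M * C) := by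
    refine intervalIntegral.norm_integral_le_of_norm_le hτ ?_ ?_
    · refine Eventually.of_forall fun s _ => ?_
      rw [norm_smul, Real.norm_eq_abs, abs_of_pos (Real.exp_pos _)]
      refine mul_le_mul_of_nonneg_left ?_ (Real.exp_pos _).le
      exact ((A s).le_opNorm _).trans
        (mul_le_mul (hAM s) (hZC s) (norm_nonneg _) hM.le)
    · exact Continuous.intervalIntegrable (by fun_prop) _ _
  have h2 : ∫ s in (0:ℝ)..τ, Real.exp (2 * M * s) * (M * C)
      = Real.exp (2 * M * τ) * (C / 2) - C / 2 := by
    have := intervalIntegral.integral_eq_sub_of_hasDerivAt (a := 0) (b := τ)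
      (f := fun s => Real.exp (2 * M * s) * (C / 2))
      (f' := fun s => Real.exp (2 * M * s) * (M * C)) ?_ ?_
    · rw [this]; simp
    · intro x _
      have h := (((hasDerivAt_id x).const_mul (2 * M)).exp).mul_const (C / 2)
      refine HasDerivAt.congr_deriv h ?_
      simp only [id]
      ring
    · exact Continuous.intervalIntegrable (by fun_prop) _ _
  rw [norm_smul, Real.norm_eq_abs, abs_of_pos (Real.exp_pos _)]
  have h3 : Real.exp (-(2 * M) * τ) * Real.exp (2 * M * τ) = 1 := by
    rw [← Real.exp_add]; simp
  calc _ ≤ Real.exp (-(2 * M) * τ) * (Real.exp (2 * M * τ) * (C / 2) - C / 2) :=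
        mul_le_mul_of_nonneg_left (h1.trans h2.le) (Real.exp_pos _).le
    _ = C / 2 - Real.exp (-(2 * M) * τ) * (C / 2) := by
        rw [mul_sub, ← mul_assoc, h3]; ring
    _ ≤ C / 2 := by have := Real.exp_pos (-(2 * M) * τ); nlinarith [mul_nonneg this.le hC]

lemma linear_ode_exists {E : Type*} [NormedAddCommGroup E] [NormedSpace ℝ E] [CompleteSpace E]
    (A : ℝ → E →L[ℝ] E) (hA : Continuous A) (M : ℝ) (hM : 0 < M) (hAM : ∀ s, ‖A s‖ ≤ M)
    (x0 : E) : ∃ X : ℝ → E, X 0 = x0 ∧ ∀ t, 0 ≤ t → HasDerivAt X (A t (X t)) t := by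
  have hint : ∀ Y : ℝ → E, Continuous Y →
      Continuous (fun s => Real.exp (2 * M * s) • A s (Y s)) := by
    intro Y hY
    exact (by fun_prop : Continuous fun s => Real.exp (2 * M * s)).smul (hA.clm_apply hY)
  let R : (ℝ → E) → ℝ → E := fun Y t => Real.exp (-(2 * M) * max t 0) •
      (x0 + ∫ s in (0:ℝ)..(max t 0), Real.exp (2 * M * s) • A s (Y s))
  have hRc : ∀ Y : ℝ → E, Continuous Y → Continuous (R Y) := by
    intro Y hY
    have h1 : Continuous fun t => ∫ s in (0:ℝ)..t, Real.exp (2 * M * s) • A s (Y s) :=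
      intervalIntegral.continuous_primitive
        (fun a b => (hint Y hY).intervalIntegrable a b) 0
    have h2 : Continuous fun t : ℝ => max t 0 := by fun_prop
    exact (by fun_prop : Continuous fun t : ℝ => Real.exp (-(2 * M) * max t 0)).smul
      (continuous_const.add (h1.comp h2))
  have hRb : ∀ (Y : ℝ →ᵇ E) t, ‖R Y t‖ ≤ ‖x0‖ + ‖Y‖ / 2 := by
    intro Y t
    have h := volterra_bound A M hM hAM Y ‖Y‖ (fun s => Y.norm_coe_le_norm s) (max t 0)
      (le_max_right _ _)
    simp only [R, smul_add]
    refine (norm_add_le _ _).trans (add_le_add ?_ h)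
    rw [norm_smul, Real.norm_eq_abs, abs_of_pos (Real.exp_pos _)]
    have : Real.exp (-(2 * M) * max t 0) ≤ 1 := by
      rw [Real.exp_le_one_iff]
      nlinarith [mul_nonneg hM.le (le_max_right t 0)]
    nlinarith [norm_nonneg x0]
  let T : (ℝ →ᵇ E) → (ℝ →ᵇ E) := fun Y =>
    BoundedContinuousFunction.ofNormedAddCommGroup (R Y) (hRc Y Y.continuous) _ (hRb Y)
  have hT : ContractingWith (1 / 2) T := by
    refine ⟨by norm_num, LipschitzWith.of_dist_le_mul fun Y Z => ?_⟩
    rw [BoundedContinuousFunction.dist_le (by positivity)]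
    intro t
    have h := volterra_bound A M hM hAM (Y - Z) (dist Y Z)
      (fun s => by
        simpa [dist_eq_norm] using BoundedContinuousFunction.dist_coe_le_dist (f := Y) (g := Z) s)
      (max t 0) (le_max_right _ _)
    have e : T Y t - T Z t = Real.exp (-(2 * M) * max t 0) •
        ∫ s in (0:ℝ)..(max t 0), Real.exp (2 * M * s) • A s ((Y - Z) s) := by
      change R Y t - R Z t = _
      simp only [R]
      rw [← smul_sub, add_sub_add_left_eq_sub, ← intervalIntegral.integral_sub
        ((hint Y Y.continuous).intervalIntegrable _ _)
        ((hint Z Z.continuous).intervalIntegrable _ _)]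
      simp [smul_sub]
    rw [dist_eq_norm, e]
    refine h.trans (le_of_eq ?_)
    push_cast; ring
  let Y := ContractingWith.fixedPoint T hT
  have hY : T Y = Y := hT.fixedPoint_isFixedPt
  let X : ℝ → E := fun t => x0 + ∫ s in (0:ℝ)..t, Real.exp (2 * M * s) • A s (Y s)
  have hXY : ∀ t, 0 ≤ t → Real.exp (2 * M * t) • Y t = X t := by
    intro t ht
    have h : R Y t = Y t := congrArg (fun F : ℝ →ᵇ E => F t) hY
    rw [← h]
    simp only [R, X, max_eq_left ht, smul_smul]
    rw [← Real.exp_add]; simp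
  refine ⟨X, by simp [X], fun t ht => ?_⟩
  rw [← hXY t ht, map_smul]
  have := intervalIntegral.integral_hasDerivAt_right
    ((hint Y Y.continuous).intervalIntegrable 0 t)
    (hint Y Y.continuous).aestronglyMeasurable.stronglyMeasurableAtFilter
    (hint Y Y.continuous).continuousAt
  exact this.const_add x0

/-- `u'' = q u` on `[0,∞)`, with `v = u'`. -/
def HomSol (q u v : ℝ → ℝ) : Prop :=
  ∀ t, 0 ≤ t → HasDerivWithinAt u (v t) (Ici 0) t ∧ HasDerivWithinAt v (q t * u t) (Ici 0) t

lemma homSol_exists (q : ℝ → ℝ) (hq : ContinuousOn q (Ici 0)) (B : ℝ)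
    (hB : ∀ t, 0 ≤ t → |q t| ≤ B) (a b : ℝ) :
    ∃ u v : ℝ → ℝ, HomSol q u v ∧ u 0 = a ∧ v 0 = b := by
  let Q : ℝ → ℝ := fun t => q (max t 0)
  have hQ : Continuous Q := by
    refine hq.comp_continuous (by fun_prop) fun t => ?_
    simp
  let L0 : ℝ × ℝ →L[ℝ] ℝ × ℝ := (ContinuousLinearMap.snd ℝ ℝ ℝ).prod 0
  let L1 : ℝ × ℝ →L[ℝ] ℝ × ℝ := (0 : ℝ × ℝ →L[ℝ] ℝ).prod (ContinuousLinearMap.fst ℝ ℝ ℝ)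
  have hB0 : 0 ≤ B := (abs_nonneg _).trans (hB 0 le_rfl)
  obtain ⟨X, hX0, hX⟩ := linear_ode_exists (fun t => L0 + Q t • L1) (by fun_prop)
    (‖L0‖ + B * ‖L1‖ + 1) (by positivity) (fun s => by
      refine (norm_add_le _ _).trans ?_
      rw [norm_smul, Real.norm_eq_abs]
      have := mul_le_mul_of_nonneg_right (hB (max s 0) (le_max_right _ _)) (norm_nonneg L1)
      simp only [Q]; linarith) (a, b)
  refine ⟨fun t => (X t).1, fun t => (X t).2, fun t ht => ?_, by simp [hX0], by simp [hX0]⟩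
  have h1 := (ContinuousLinearMap.fst ℝ ℝ ℝ).hasFDerivAt.comp_hasDerivAt t (hX t ht)
  have h2 := (ContinuousLinearMap.snd ℝ ℝ ℝ).hasFDerivAt.comp_hasDerivAt t (hX t ht)
  simp [L0, L1, Q, max_eq_left ht] at h1 h2
  exact ⟨h1.hasDerivWithinAt, h2.hasDerivWithinAt⟩

lemma mono_of_hasDeriv {F F' : ℝ → ℝ} {a : ℝ} (ha : 0 ≤ a)
    (hF : ∀ t, a ≤ t → HasDerivWithinAt F (F' t) (Ici 0) t)
    (h : ∀ t, a < t → 0 ≤ F' t) {s t : ℝ} (hs : a ≤ s) (hst : s ≤ t) : F s ≤ F t := by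
  refine monotoneOn_of_deriv_nonneg (convex_Ici a) (f := F) ?_ ?_ ?_ hs (hs.trans hst) hst
  · intro x hx
    exact (hF x hx).continuousWithinAt.mono (Ici_subset_Ici.2 ha)
  · intro x hx
    rw [interior_Ici] at hx
    exact ((hF x hx.le).hasDerivAt
      (Ici_mem_nhds (ha.trans_lt hx))).differentiableAt.differentiableWithinAt
  · intro x hx
    rw [interior_Ici] at hx
    rw [((hF x hx.le).hasDerivAt (Ici_mem_nhds (ha.trans_lt hx))).deriv]
    exact h x hx

lemma strictMono_of_hasDeriv {F F' : ℝ → ℝ} {a : ℝ} (ha : 0 ≤ a)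
    (hF : ∀ t, a ≤ t → HasDerivWithinAt F (F' t) (Ici 0) t)
    (h : ∀ t, a < t → 0 < F' t) {s t : ℝ} (hs : a ≤ s) (hst : s < t) : F s < F t := by
  refine strictMonoOn_of_deriv_pos (convex_Ici a) (f := F) ?_ ?_ hs (hs.trans hst.le) hst
  · intro x hx
    exact (hF x hx).continuousWithinAt.mono (Ici_subset_Ici.2 ha)
  · intro x hx
    rw [interior_Ici] at hx
    rw [((hF x hx.le).hasDerivAt (Ici_mem_nhds (ha.trans_lt hx))).deriv]
    exact h x hx

lemma const_of_hasDeriv {F F' : ℝ → ℝ} {a : ℝ} (ha : 0 ≤ a)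
    (hF : ∀ t, a ≤ t → HasDerivWithinAt F (F' t) (Ici 0) t)
    (h : ∀ t, a ≤ t → F' t = 0) {s t : ℝ} (hs : a ≤ s) (hst : s ≤ t) : F s = F t := by
  apply le_antisymm
  · exact mono_of_hasDeriv ha hF (fun t ht => (h t ht.le).ge) hs hst
  · have := mono_of_hasDeriv (F := fun t => - F t) (F' := fun t => - F' t) ha
      (fun t ht => (hF t ht).neg) (fun t ht => by simp [h t ht.le]) hs hst
    simpa using this

lemma pos_of_never_zero {F : ℝ → ℝ} {a : ℝ} (hF : ContinuousOn F (Ici a)) (h0 : 0 < F a)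
    (hne : ∀ t, a ≤ t → F t ≠ 0) {t : ℝ} (ht : a ≤ t) : 0 < F t := by
  by_contra hneg
  push Not at hneg
  obtain ⟨x, hx, hx0⟩ := intermediate_value_Icc' ht (hF.mono Icc_subset_Ici_self) ⟨hneg, h0.le⟩
  exact hne x hx.1 hx0

lemma HomSol.comb {q u v u' v' : ℝ → ℝ} (h : HomSol q u v) (h' : HomSol q u' v') (c : ℝ) :
    HomSol q (fun t => u t - c * u' t) (fun t => v t - c * v' t) := by
  intro t ht
  refine ⟨(h t ht).1.sub ((h' t ht).1.const_mul c), ?_⟩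
  exact ((h t ht).2.sub ((h' t ht).2.const_mul c)).congr_deriv (by ring)

lemma HomSol.cont {q u v : ℝ → ℝ} (h : HomSol q u v) : ContinuousOn u (Ici 0) :=
  fun t ht => (h t ht).1.continuousWithinAt

lemma HomSol.cont' {q u v : ℝ → ℝ} (h : HomSol q u v) : ContinuousOn v (Ici 0) :=
  fun t ht => (h t ht).2.continuousWithinAt

/-- The Wronskian of two solutions is constant. -/
lemma HomSol.wronskian {q u v u' v' : ℝ → ℝ} (h : HomSol q u v) (h' : HomSol q u' v')
    {t : ℝ} (ht : 0 ≤ t) : u t * v' t - v t * u' t = u 0 * v' 0 - v 0 * u' 0 := by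
  refine (const_of_hasDeriv (F := fun t => u t * v' t - v t * u' t)
    (F' := fun t => 0) le_rfl (fun t ht => ?_) (fun _ _ => rfl) le_rfl ht).symm
  exact (((h t ht).1.mul (h' t ht).2).sub ((h t ht).2.mul (h' t ht).1)).congr_deriv (by ring)

/-- Convexity: positive increasing data at `a` persist and give linear growth when `q ≥ 0`. -/
lemma HomSol.convex {q u v : ℝ → ℝ} (h : HomSol q u v) {a : ℝ} (ha : 0 ≤ a)
    (hq : ∀ t, a ≤ t → 0 ≤ q t) (hu : 0 < u a) (hv : 0 < v a) {t : ℝ} (ht : a ≤ t) :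
    0 < u t ∧ u a + v a * (t - a) ≤ u t := by
  have hprod : ∀ t, a ≤ t → 0 < u t * v t := by
    intro t ht
    have := mono_of_hasDeriv (F := fun t => u t * v t)
      (F' := fun t => v t * v t + u t * (q t * u t)) ha
      (fun t ht => (h t (ha.trans ht)).1.mul (h t (ha.trans ht)).2)
      (fun t ht => by
        have := hq t ht.le
        nlinarith [mul_self_nonneg (v t), mul_nonneg this (mul_self_nonneg (u t))]) le_rfl ht
    have h2 := mul_pos hu hv
    linarith
  have hup : ∀ t, a ≤ t → 0 < u t := fun t ht =>
    pos_of_never_zero (h.cont.mono (Ici_subset_Ici.2 ha)) hu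
      (fun t ht h0 => by have := hprod t ht; simp [h0] at this) ht
  have hv' : ∀ t, a ≤ t → v a ≤ v t := fun t ht =>
    mono_of_hasDeriv (F := v) (F' := fun t => q t * u t) ha
      (fun t ht => (h t (ha.trans ht)).2)
      (fun t ht => mul_nonneg (hq t ht.le) (hup t ht.le).le) le_rfl ht
  refine ⟨hup t ht, ?_⟩
  have := mono_of_hasDeriv (F := fun t => u t - v a * t) (F' := fun t => v t - v a * 1) ha
    (fun t ht => (h t (ha.trans ht)).1.sub ((hasDerivWithinAt_id t _).const_mul (v a)))
    (fun t ht => by have := hv' t ht.le; linarith) le_rfl ht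
  linarith

/-- The abstract data: `φ > 0` solves `φ'' = (q - μ) φ`, `ψ = φ'`. -/
structure Setup (q φ ψ : ℝ → ℝ) (μ : ℝ) : Prop where
  hμ : 0 < μ
  hφ : ∀ t, 0 ≤ t → HasDerivWithinAt φ (ψ t) (Ici 0) t
  hψ : ∀ t, 0 ≤ t → HasDerivWithinAt ψ ((q t - μ) * φ t) (Ici 0) t
  pos : ∀ t, 0 ≤ t → 0 < φ t
  ψ0 : ψ 0 = 0
  ψneg : ∀ t, 0 ≤ t → ψ t ≤ 0
  ψlim : Tendsto ψ atTop (nhds 0)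
  qpos : ∃ T, 0 < T ∧ ∀ t, T ≤ t → 0 ≤ q t
  qcont : ContinuousOn q (Ici 0)
  qbdd : ∃ B, ∀ t, 0 ≤ t → |q t| ≤ B

section
variable {q φ ψ : ℝ → ℝ} {μ : ℝ}

lemma Setup.hasDerivW (S : Setup q φ ψ μ) {u v : ℝ → ℝ} (h : HomSol q u v) (t : ℝ) (ht : 0 ≤ t) :
    HasDerivWithinAt (fun t => v t * φ t - u t * ψ t) (μ * u t * φ t) (Ici 0) t :=
  (((h t ht).2.mul (S.hφ t ht)).sub ((h t ht).1.mul (S.hψ t ht))).congr_deriv (by ring)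

lemma Setup.hasDerivR (S : Setup q φ ψ μ) {u v : ℝ → ℝ} (h : HomSol q u v) (t : ℝ) (ht : 0 ≤ t) :
    HasDerivWithinAt (fun t => u t / φ t) ((v t * φ t - u t * ψ t) / φ t ^ 2) (Ici 0) t :=
  (h t ht).1.div (S.hφ t ht) (S.pos t ht).ne'

lemma Setup.growth (S : Setup q φ ψ μ) {u v : ℝ → ℝ} (h : HomSol q u v)
    (h0 : 0 ≤ u 0 * v 0) {t : ℝ} (ht : 0 ≤ t) :
    (u 0 / φ 0) ^ 2 ≤ (u t / φ t) ^ 2 ∧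
    (v 0 * φ 0) ^ 2 ≤ (v t * φ t - u t * ψ t) ^ 2 := by
  have hrW : ∀ t, 0 ≤ t → 0 ≤ (u t / φ t) * (v t * φ t - u t * ψ t) := by
    intro t ht
    have := mono_of_hasDeriv (F := fun t => (u t / φ t) * (v t * φ t - u t * ψ t))
      le_rfl (fun t ht => (S.hasDerivR h t ht).mul (S.hasDerivW h t ht)) (fun t ht => by
        have hp := S.pos t ht.le
        have h1 : 0 ≤ (v t * φ t - u t * ψ t) / φ t ^ 2 * (v t * φ t - u t * ψ t) := by
          rw [div_mul_eq_mul_div]; exact div_nonneg (mul_self_nonneg _) (sq_nonneg _)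
        have h2 : u t / φ t * (μ * u t * φ t) = μ * (u t * u t) := by
          field_simp
        rw [h2]
        exact add_nonneg h1 (mul_nonneg S.hμ.le (mul_self_nonneg _))) le_rfl ht
    refine le_trans ?_ this
    have hp := S.pos 0 le_rfl
    have : u 0 / φ 0 * (v 0 * φ 0 - u 0 * ψ 0) = u 0 * v 0 := by
      rw [S.ψ0]; field_simp; ring
    rw [this]; exact h0
  constructor
  · refine mono_of_hasDeriv (F := fun t => (u t / φ t) ^ 2)
      le_rfl (fun t ht => (S.hasDerivR h t ht).pow 2) (fun t ht => ?_) le_rfl ht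
    have hp := S.pos t ht.le
    have e := hrW t ht.le
    have : (↑2 * (u t / φ t) ^ (2 - 1) * ((v t * φ t - u t * ψ t) / φ t ^ 2) : ℝ)
      = 2 * ((u t / φ t) * (v t * φ t - u t * ψ t)) / φ t ^ 2 := by
      simp only [Nat.add_one_sub_one, pow_one]; ring
    push_cast
    rw [this]; positivity
  · have := mono_of_hasDeriv (F := fun t => (v t * φ t - u t * ψ t) ^ 2)
      le_rfl (fun t ht => (S.hasDerivW h t ht).pow 2) (fun t ht => ?_) le_rfl ht
    · simpa [S.ψ0] using this
    have hp := S.pos t ht.le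
    have hm := S.hμ
    have e := hrW t ht.le
    have : (↑2 * (v t * φ t - u t * ψ t) ^ (2 - 1) * (μ * u t * φ t) : ℝ)
      = 2 * μ * φ t ^ 2 * ((u t / φ t) * (v t * φ t - u t * ψ t)) := by
      simp only [Nat.add_one_sub_one, pow_one]; field_simp
    push_cast
    rw [this]; positivity

lemma Setup.u1_pos (S : Setup q φ ψ μ) {u v : ℝ → ℝ} (h : HomSol q u v)
    (hu : u 0 = 0) (hv : v 0 = 1) :
    (∀ t, 0 ≤ t → φ 0 ≤ v t * φ t - u t * ψ t) ∧ ∀ t, 0 < t → 0 < u t := by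
  have p0 := S.pos 0 le_rfl
  have hW : ∀ t, 0 ≤ t → 0 < v t * φ t - u t * ψ t := by
    intro t ht
    refine pos_of_never_zero (F := fun t => v t * φ t - u t * ψ t) (a := 0)
      (fun t ht => (S.hasDerivW h t ht).continuousWithinAt) ?_ (fun t ht h0 => ?_) ht
    · simpa [hu, hv] using p0
    · have := (S.growth h (by simp [hu]) ht).2
      rw [h0, hv] at this
      nlinarith
  constructor
  · intro t ht
    have := (S.growth h (by simp [hu]) ht).2
    rw [hv, one_mul] at this
    exact le_of_sq_le_sq this (hW t ht).le
  · intro t ht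
    have := strictMono_of_hasDeriv (F := fun t => u t / φ t) le_rfl
      (fun t ht => S.hasDerivR h t ht)
      (fun t ht => div_pos (hW t ht.le) (pow_pos (S.pos t ht.le) 2)) le_rfl ht
    simp only [hu, zero_div] at this
    have h2 := S.pos t ht.le
    by_contra hc
    push Not at hc
    exact absurd this (not_lt.2 (div_nonpos_of_nonpos_of_nonneg hc h2.le))

lemma Setup.u0_pos (S : Setup q φ ψ μ) {u v : ℝ → ℝ} (h : HomSol q u v)
    (hu : u 0 = 1) (hv : v 0 = 0) : ∀ t, 0 ≤ t → 0 < u t := by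
  intro t ht
  have p0 := S.pos 0 le_rfl
  refine pos_of_never_zero (a := 0) h.cont (by simp [hu]) (fun t ht h0 => ?_) ht
  have := (S.growth h (by simp [hv]) ht).1
  rw [h0, hu] at this
  have h3 : 0 < (1 / φ 0) ^ 2 := by positivity
  simp at this h3
  linarith

lemma Setup.psi_small (S : Setup q φ ψ μ) (T C δ : ℝ) (hδ : 0 < δ) :
    ∃ t, T ≤ t ∧ C * (- ψ t) < δ := by
  have h1 : Tendsto (fun t => C * (- ψ t)) atTop (nhds 0) := by
    simpa using S.ψlim.neg.const_mul C
  obtain ⟨t, ht, ht'⟩ := ((h1.eventually (gt_mem_nhds hδ)).and (eventually_ge_atTop T)).exists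
  exact ⟨t, ht', ht⟩

lemma Setup.unique (S : Setup q φ ψ μ) {d e : ℝ → ℝ} (hd : HomSol q d e) (h0 : d 0 = 0)
    {M : ℝ} (hM : ∀ t, 0 ≤ t → |d t| ≤ M) : ∀ t, 0 ≤ t → d t = 0 := by
  obtain ⟨B, hB⟩ := S.qbdd
  obtain ⟨T, hT, hqT⟩ := S.qpos
  obtain ⟨u, v, h, hu, hv⟩ := homSol_exists q S.qcont B hB 0 1
  obtain ⟨hW, hup⟩ := S.u1_pos h hu hv
  have hwr : ∀ t, 0 ≤ t → d t * v t - e t * u t = 0 := by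
    intro t ht
    rw [hd.wronskian h ht, h0, hu]; ring
  have hconst : ∀ s t, 0 < s → s ≤ t → d s / u s = d t / u t := by
    intro s t hs hst
    refine const_of_hasDeriv (F := fun t => d t / u t) (a := s) hs.le
      (fun t ht => (hd t (hs.le.trans ht)).1.div (h t (hs.le.trans ht)).1
        (hup t (hs.trans_le ht)).ne') (fun t ht => ?_) le_rfl hst
    have := hwr t (hs.le.trans ht)
    rw [show e t * u t - d t * v t = 0 by linarith, zero_div]
  by_contra hne
  push Not at hne
  obtain ⟨s, hs, hds⟩ := hne
  have hs' : 0 < s := by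
    rcases hs.eq_or_lt with h' | h'
    · exact absurd (h' ▸ h0) hds
    · exact h'
  set κ := d s / u s with hκ
  have hκ0 : κ ≠ 0 := div_ne_zero hds (hup s hs').ne'
  have hub : ∀ t, s ≤ t → u t ≤ M / |κ| := by
    intro t ht
    have hut := hup t (hs'.trans_le ht)
    have e1 : κ * u t = d t := by
      rw [hκ, hconst s t hs' ht]; field_simp
    rw [le_div_iff₀ (abs_pos.2 hκ0)]
    have := hM t (hs.trans ht)
    rw [← e1, abs_mul, abs_of_pos hut] at this
    linarith
  have hvn : ∀ t, max s T ≤ t → v t ≤ 0 := by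
    intro t ht
    by_contra hc
    push Not at hc
    have hst := (le_max_left _ _).trans ht
    have hTt := (le_max_right _ _).trans ht
    have hut := hup t (hs'.trans_le hst)
    have hMk : 0 < M / |κ| := hut.trans_le (hub t hst)
    have := (h.convex (t := t + M / |κ| / v t) (hs.trans hst) (fun x hx => hqT x (hTt.trans hx))
      hut hc (by have := div_pos hMk hc; linarith)).2
    have e2 : v t * (t + M / |κ| / v t - t) = M / |κ| := by
      rw [add_sub_cancel_left]; field_simp
    rw [e2] at this
    have := hub (t + M / |κ| / v t) (by have := div_pos hMk hc; linarith)
    linarith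
  have hMk : 0 < M / |κ| := (hup s hs').trans_le (hub s le_rfl)
  obtain ⟨t, ht, ht'⟩ := S.psi_small (max s T) (M / |κ|) (φ 0) (S.pos 0 le_rfl)
  have hst := (le_max_left _ _).trans ht
  have h1 := hW t (hs.trans hst)
  have h2 := hvn t ht
  have h3 := hub t hst
  have h4 := S.ψneg t (hs.trans hst)
  have h5 := S.pos t (hs.trans hst)
  nlinarith [mul_nonneg (sub_nonneg.2 h3) (neg_nonneg.2 h4), mul_nonneg (neg_nonneg.2 h2) h5.le]

lemma Setup.exists_decaying (S : Setup q φ ψ μ) : ∃ h k : ℝ → ℝ, HomSol q h k ∧ h 0 = 1 ∧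
    (∃ C, ∀ t, 0 ≤ t → |h t| ≤ C) ∧ (∀ t, 0 < t → φ 0 * h t < φ t) ∧ k 0 < 0 := by
  obtain ⟨B, hB⟩ := S.qbdd
  obtain ⟨T, hT, hqT⟩ := S.qpos
  obtain ⟨u1, v1, h1, hu1, hv1⟩ := homSol_exists q S.qcont B hB 0 1
  obtain ⟨u0, v0, h0, hu0, hv0⟩ := homSol_exists q S.qcont B hB 1 0
  obtain ⟨-, p1⟩ := S.u1_pos h1 hu1 hv1
  have p0 := S.u0_pos h0 hu0 hv0
  have hanti : ∀ s t, 0 < s → s < t → u0 t / u1 t < u0 s / u1 s := by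
    intro s t hs hst
    have := strictMono_of_hasDeriv (F := fun t => -(u0 t / u1 t)) (a := s) hs.le
      (fun t ht => ((h0 t (hs.le.trans ht)).1.div (h1 t (hs.le.trans ht)).1
        (p1 t (hs.trans_le ht)).ne').neg) (fun t ht => ?_) le_rfl hst
    · linarith
    have hw := h0.wronskian h1 (hs.le.trans ht.le)
    rw [hu0, hv1, hv0] at hw
    rw [show v0 t * u1 t - u0 t * v1 t = -1 by linarith, neg_div, neg_neg]
    have := p1 t (hs.trans ht)
    positivity
  set R : Set ℝ := (fun t => u0 t / u1 t) '' Ioi 0 with hR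
  have hRne : R.Nonempty := ⟨_, 1, by simp, rfl⟩
  have hRb : BddBelow R := by
    refine ⟨0, ?_⟩
    rintro _ ⟨t, ht, rfl⟩
    exact (div_pos (p0 t (le_of_lt ht)) (p1 t ht)).le
  set c := sInf R with hc
  have hclt : ∀ t, 0 < t → c < u0 t / u1 t := fun t ht =>
    (csInf_le hRb ⟨t + 1, by simp; linarith, rfl⟩).trans_lt (hanti t (t + 1) ht (by linarith))
  have hh := h0.comb h1 c
  have hpos : ∀ t, 0 ≤ t → 0 < u0 t - c * u1 t := by
    intro t ht
    rcases ht.eq_or_lt with rfl | ht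
    · simp [hu0, hu1]
    · have := hclt t ht
      rw [lt_div_iff₀ (p1 t ht)] at this
      linarith
  set h : ℝ → ℝ := fun t => u0 t - c * u1 t with hdef
  set k : ℝ → ℝ := fun t => v0 t - c * v1 t with kdef
  have hk : ∀ t, T ≤ t → k t ≤ 0 := by
    intro t1 ht1
    by_contra hcon
    push Not at hcon
    have t1pos := hT.trans_le ht1
    have hu := p1 t1 t1pos
    have hht := hpos t1 t1pos.le
    set ε := min (h t1 / (2 * u1 t1)) (k t1 / (2 * (|v1 t1| + 1))) with hε
    have hε0 : 0 < ε := lt_min (by positivity) (by positivity)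
    have e1 : ε * u1 t1 < h t1 := by
      have : ε ≤ h t1 / (2 * u1 t1) := min_le_left _ _
      rw [le_div_iff₀ (by positivity)] at this
      change 0 < h t1 at hht
      nlinarith
    have e2 : ε * v1 t1 < k t1 := by
      have : ε ≤ k t1 / (2 * (|v1 t1| + 1)) := min_le_right _ _
      rw [le_div_iff₀ (by positivity)] at this
      nlinarith [le_abs_self (v1 t1), abs_nonneg (v1 t1),
        mul_nonneg hε0.le (sub_nonneg.2 (le_abs_self (v1 t1)))]
    have hge : ∀ t, t1 ≤ t → c + ε ≤ u0 t / u1 t := by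
      intro t ht
      have := ((hh.comb h1 ε).convex t1pos.le (fun x hx => hqT x (ht1.trans hx))
        (by linarith) (by linarith) ht).1
      rw [le_div_iff₀ (p1 t (t1pos.trans_le ht))]
      simp only [hdef] at this
      linarith
    have : c + ε ≤ c := by
      refine le_csInf hRne ?_
      rintro _ ⟨t, ht, rfl⟩
      rcases le_or_gt t1 t with h' | h'
      · exact hge t h'
      · exact (hge t1 le_rfl).trans (hanti t t1 ht h').le
    linarith
  have hbdd : ∃ C, ∀ t, 0 ≤ t → |h t| ≤ C := by
    obtain ⟨C, hC⟩ := (isCompact_Icc (a := (0:ℝ)) (b := T)).exists_bound_of_continuousOn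
      (hh.cont.mono Icc_subset_Ici_self)
    refine ⟨C, fun t ht => ?_⟩
    rcases le_total t T with h' | h'
    · exact hC t ⟨ht, h'⟩
    · have := mono_of_hasDeriv (F := fun t => - h t) hT.le
        (fun t ht => (hh t (hT.le.trans ht)).1.neg)
        (fun t ht => neg_nonneg.2 (hk t ht.le)) le_rfl h'
      have h2 := hC T ⟨hT.le, le_rfl⟩
      have h3 := hpos t ht
      have h4 := le_abs_self (h T)
      rw [abs_of_pos h3]
      simp only [Real.norm_eq_abs] at h2
      change |h T| ≤ C at h2
      change h t ≤ C
      linarith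
  obtain ⟨C, hC⟩ := hbdd
  have hC0 : 0 ≤ C := (abs_nonneg _).trans (hC 0 le_rfl)
  have hWs : ∀ s t, 0 ≤ s → s < t → k s * φ s - h s * ψ s < k t * φ t - h t * ψ t := by
    intro s t hs hst
    exact strictMono_of_hasDeriv (F := fun t => k t * φ t - h t * ψ t) le_rfl
      (fun t ht => S.hasDerivW hh t ht)
      (fun t ht => mul_pos (mul_pos S.hμ (hpos t ht.le)) (S.pos t ht.le)) hs hst
  have hW : ∀ t, 0 ≤ t → k t * φ t - h t * ψ t < 0 := by
    intro t ht
    by_contra hcon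
    push Not at hcon
    have hδ := hcon.trans_lt (hWs t (t + 1) ht (by linarith))
    obtain ⟨s, hs, hs'⟩ := S.psi_small (max (t + 2) T) C _ hδ
    have hts := (le_max_left _ _).trans hs
    have hTs := (le_max_right _ _).trans hs
    have a1 := hWs (t + 1) s (by linarith) (by linarith)
    have a2 := hk s hTs
    have a3 := (le_abs_self _).trans (hC s (by linarith))
    have a4 := S.ψneg s (by linarith)
    have a5 := S.pos s (by linarith)
    nlinarith [mul_nonneg (sub_nonneg.2 a3) (neg_nonneg.2 a4), mul_nonneg (neg_nonneg.2 a2) a5.le]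
  have hh0 : h 0 = 1 := by simp [hdef, hu0, hu1]
  have q0 := S.pos 0 le_rfl
  refine ⟨h, k, hh, hh0, ⟨C, hC⟩, fun t ht => ?_, ?_⟩
  · have := strictMono_of_hasDeriv (F := fun t => -(h t / φ t)) le_rfl
      (fun t ht => (S.hasDerivR hh t ht).neg)
      (fun t ht => by
        rw [← neg_div]
        exact div_pos (neg_pos.2 (hW t ht.le)) (pow_pos (S.pos t ht.le) 2)) le_rfl ht
    have qt := S.pos t ht.le
    simp only [hh0, neg_lt_neg_iff] at this
    rw [div_lt_div_iff₀ qt q0] at this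
    linarith
  · have := hW 0 le_rfl
    rw [S.ψ0] at this
    by_contra hcon
    push Not at hcon
    nlinarith [mul_nonneg hcon q0.le]

end

lemma extract_C2 {g G : ℝ → ℝ} (hg : ContDiffOn ℝ 2 g (Ici 0))
    (hG : ∀ t ∈ Ioi (0:ℝ), derivWithin (derivWithin g (Ici 0)) (Ici 0) t = G t)
    (hGc : ContinuousOn G (Ici 0)) (t : ℝ) (ht : 0 ≤ t) :
    HasDerivWithinAt g (derivWithin g (Ici 0) t) (Ici 0) t ∧
    HasDerivWithinAt (derivWithin g (Ici 0)) (G t) (Ici 0) t := by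
  have hs : UniqueDiffOn ℝ (Ici (0:ℝ)) := uniqueDiffOn_Ici 0
  have h1 : ContDiffOn ℝ 1 (derivWithin g (Ici 0)) (Ici 0) := hg.derivWithin hs (by norm_num)
  have h2 : ContinuousOn (derivWithin (derivWithin g (Ici 0)) (Ici 0)) (Ici 0) :=
    h1.continuousOn_derivWithin hs le_rfl
  have e : ∀ t, 0 ≤ t → derivWithin (derivWithin g (Ici 0)) (Ici 0) t = G t := by
    intro t ht
    rcases ht.eq_or_lt with rfl | ht
    · have a1 := (h2 0 self_mem_Ici).mono_left (nhdsWithin_mono (0:ℝ) Ioi_subset_Ici_self)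
      have a2 := (hGc 0 self_mem_Ici).mono_left (nhdsWithin_mono (0:ℝ) Ioi_subset_Ici_self)
      exact tendsto_nhds_unique (a1.congr' (by
        filter_upwards [self_mem_nhdsWithin] with x hx using hG x hx)) a2
    · exact hG t ht
  refine ⟨(hg.differentiableOn (by norm_num) t ht).hasDerivWithinAt, ?_⟩
  rw [← e t ht]
  exact (h1.differentiableOn (by norm_num) t ht).hasDerivWithinAt

lemma build_C2 {g g1 G : ℝ → ℝ} (h : ∀ t, 0 ≤ t → HasDerivWithinAt g (g1 t) (Ici 0) t)
    (h1 : ∀ t, 0 ≤ t → HasDerivWithinAt g1 (G t) (Ici 0) t) (hG : ContinuousOn G (Ici 0)) :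
    ContDiffOn ℝ 2 g (Ici 0) ∧ (∀ t, 0 ≤ t → derivWithin g (Ici 0) t = g1 t) ∧
    (∀ t, 0 ≤ t → derivWithin (derivWithin g (Ici 0)) (Ici 0) t = G t) := by
  have hs : UniqueDiffOn ℝ (Ici (0:ℝ)) := uniqueDiffOn_Ici 0
  have e1 : ∀ t, 0 ≤ t → derivWithin g (Ici 0) t = g1 t := fun t ht =>
    (h t ht).derivWithin (hs t ht)
  have h1' : ∀ t, 0 ≤ t → HasDerivWithinAt (derivWithin g (Ici 0)) (G t) (Ici 0) t :=
    fun t ht => (h1 t ht).congr (fun x hx => e1 x hx) (e1 t ht)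
  have e2 : ∀ t, 0 ≤ t → derivWithin (derivWithin g (Ici 0)) (Ici 0) t = G t := fun t ht =>
    (h1' t ht).derivWithin (hs t ht)
  refine ⟨?_, e1, e2⟩
  rw [show (2 : WithTop ℕ∞) = 1 + 1 by norm_num, contDiffOn_succ_iff_derivWithin hs]
  refine ⟨fun t ht => (h t ht).differentiableWithinAt, by simp, ?_⟩
  rw [show (1 : WithTop ℕ∞) = 0 + 1 by norm_num, contDiffOn_succ_iff_derivWithin hs]
  refine ⟨fun t ht => (h1' t ht).differentiableWithinAt, by simp, ?_⟩
  rw [contDiffOn_zero]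
  exact hG.congr fun t ht => e2 t ht

/-- For `μ > 0`, the problem `p'' - μp + f'(w)p = -w'` on `(0,∞)` with
`p(0) = 0` has a unique bounded solution; it is positive on `(0,∞)` and `p'(0) > 0`. -/
theorem unique_bounded_solution_mu (f w : ℝ → ℝ) (hf : Monostable f)
    (hw : IsHeteroclinic f w) (μ : ℝ) (hμ : 0 < μ) :
    ∃ p : ℝ → ℝ, IsBddSolMu f w μ p ∧
      (∀ p₂ : ℝ → ℝ, IsBddSolMu f w μ p₂ → Set.EqOn p₂ p (Set.Ici 0)) ∧
      (∀ t ∈ Set.Ioi (0 : ℝ), 0 < p t) ∧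
      0 < derivWithin p (Set.Ici 0) 0 := by
  obtain ⟨hfs, hf0, hf1, hfpos, hfd⟩ := hf
  obtain ⟨hw2, hweq, hw0, hwlim, hwpos, hwmono, hwd⟩ := hw
  set φ : ℝ → ℝ := derivWithin w (Ici 0) with hφdef
  have hwc : ContinuousOn w (Ici 0) := hw2.continuousOn
  have hfdiff : Differentiable ℝ f := hfs.differentiable (by simp)
  have hfd' : Continuous (deriv f) := hfs.continuous_deriv (by simp)
  have hW := extract_C2 (G := fun t => - f (w t)) hw2
    (fun t ht => by have := hweq t ht; linarith)
    (hfdiff.continuous.comp_continuousOn hwc).neg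
  have hwle : ∀ t, 0 ≤ t → w t ≤ 1 := by
    intro t ht
    refine ge_of_tendsto hwlim ?_
    filter_upwards [eventually_ge_atTop t] with x hx
    exact hwmono.monotoneOn ht (ht.trans hx) hx
  have hwlt : ∀ t, 0 ≤ t → w t < 1 := fun t ht =>
    (hwmono (mem_Ici.2 ht) (mem_Ici.2 (by linarith : (0:ℝ) ≤ t + 1)) (by linarith)).trans_le
      (hwle (t + 1) (by linarith))
  have hwnn : ∀ t, 0 ≤ t → 0 ≤ w t := by
    intro t ht
    rcases ht.eq_or_lt with rfl | ht
    · exact hw0.ge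
    · exact (hwpos t ht).le
  let q : ℝ → ℝ := fun t => μ - deriv f (w t)
  have hqc : ContinuousOn q (Ici 0) :=
    continuousOn_const.sub (hfd'.comp_continuousOn hwc)
  have S : Setup q φ (fun t => - f (w t)) μ :=
    { hμ := hμ
      hφ := fun t ht => (hW t ht).2
      hψ := fun t ht => by
        have := ((hfdiff (w t)).hasDerivAt.comp_hasDerivWithinAt t (hW t ht).1).neg
        exact this.congr_deriv (by simp only [q]; ring)
      pos := fun t ht => hwd t ht
      ψ0 := by simp [hw0, hf0]
      ψneg := fun t ht => by
        rcases (hwnn t ht).eq_or_lt with h | h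
        · simp [← h, hf0]
        · have := hfpos (w t) ⟨h, hwlt t ht⟩
          linarith
      ψlim := by
        have := ((hfdiff.continuous.tendsto 1).comp hwlim).neg
        simpa [hf1] using this
      qpos := by
        have h1 := (hfd'.tendsto 1).comp hwlim
        obtain ⟨T, hT⟩ := eventually_atTop.1 (h1.eventually (gt_mem_nhds hfd))
        refine ⟨max T 1, by positivity, fun t ht => ?_⟩
        have := hT t ((le_max_left _ _).trans ht)
        simp only [Function.comp] at this
        simp only [q]
        linarith
      qcont := hqc
      qbdd := by
        obtain ⟨B, hB⟩ := (isCompact_Icc (a := (0:ℝ)) (b := 1)).exists_bound_of_continuousOn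
          (f := fun s => μ - deriv f s) (by fun_prop)
        exact ⟨B, fun t ht => hB (w t) ⟨hwnn t ht, hwle t ht⟩⟩ }
  obtain ⟨h, k, hh, hh0, ⟨C, hC⟩, hlt, hk0⟩ := S.exists_decaying
  have hφc : ContinuousOn φ (Ici 0) := fun t ht => (S.hφ t ht).continuousWithinAt
  obtain ⟨pC, pd, pdd⟩ := build_C2 (g := fun t => (φ t - φ 0 * h t) / μ)
    (g1 := fun t => (- f (w t) - φ 0 * k t) / μ)
    (G := fun t => ((q t - μ) * φ t - φ 0 * (q t * h t)) / μ)
    (fun t ht => ((S.hφ t ht).sub ((hh t ht).1.const_mul (φ 0))).div_const μ)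
    (fun t ht => ((S.hψ t ht).sub ((hh t ht).2.const_mul (φ 0))).div_const μ)
    ((((hqc.sub continuousOn_const).mul hφc).sub
      (continuousOn_const.mul (hqc.mul hh.cont))).div_const μ)
  have φanti : ∀ t, 0 ≤ t → φ t ≤ φ 0 := by
    intro t ht
    have := mono_of_hasDeriv (F := fun t => - φ t) le_rfl (fun t ht => (S.hφ t ht).neg)
      (fun t ht => neg_nonneg.2 (S.ψneg t ht.le)) le_rfl ht
    linarith
  have φ0 : 0 < φ 0 := S.pos 0 le_rfl
  have hp : IsBddSolMu f w μ (fun t => (φ t - φ 0 * h t) / μ) := by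
    refine ⟨pC, fun t ht => ?_, by simp [hh0], (φ 0 + φ 0 * C) / μ, fun t ht => ?_⟩
    · rw [pdd t (le_of_lt ht)]
      simp only [q]
      rw [← hφdef]
      field_simp
      ring
    · rw [abs_div, abs_of_pos hμ]
      refine div_le_div_of_nonneg_right ?_ hμ.le
      refine (abs_sub _ _).trans ?_
      rw [abs_of_pos (S.pos t ht), abs_mul, abs_of_pos φ0]
      exact add_le_add (φanti t ht) (mul_le_mul_of_nonneg_left (hC t ht) φ0.le)
  refine ⟨_, hp, ?_, fun t ht => div_pos (by have := hlt t ht; linarith) hμ, ?_⟩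
  · have key : ∀ p, IsBddSolMu f w μ p → ∀ t, 0 ≤ t →
        HasDerivWithinAt p (derivWithin p (Ici 0) t) (Ici 0) t ∧
        HasDerivWithinAt (derivWithin p (Ici 0)) (q t * p t - φ t) (Ici 0) t := by
      intro p hp
      refine extract_C2 (G := fun t => q t * p t - φ t) hp.1 (fun t ht => ?_)
        ((hqc.mul hp.1.continuousOn).sub hφc)
      have := hp.2.1 t ht
      simp only [q]
      linarith
    intro p₂ hp₂ t ht
    have k1 := key _ hp
    have k2 := key p₂ hp₂
    obtain ⟨M1, hM1⟩ := hp.2.2.2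
    obtain ⟨M2, hM2⟩ := hp₂.2.2.2
    have hd : HomSol q (fun t => p₂ t - (φ t - φ 0 * h t) / μ)
        (fun t => derivWithin p₂ (Ici 0) t
          - derivWithin (fun t => (φ t - φ 0 * h t) / μ) (Ici 0) t) := by
      intro t ht
      refine ⟨(k2 t ht).1.sub (k1 t ht).1, ?_⟩
      exact ((k2 t ht).2.sub (k1 t ht).2).congr_deriv (by ring)
    have := S.unique hd (by simp [hp₂.2.2.1, hh0]) (M := M2 + M1)
      (fun t ht => (abs_sub _ _).trans (add_le_add (hM2 t ht) (hM1 t ht))) t ht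
    exact sub_eq_zero.1 this
  · rw [pd 0 le_rfl, hw0, hf0]
    refine div_pos ?_ hμ
    nlinarith [mul_pos φ0 (neg_pos.2 hk0)]
end

section
/- Let f be a monostable nonlinearity and w the associated heteroclinic. Then there exists a constant a > 0 such that for every continuously differentiable function q : [0,∞) → ℝ with compact support and q(0) = 0, one has a · ∫₀^∞ q(t)² dt ≤ ∫₀^∞ ( q'(t)² − f'(w(t)) q(t)² ) dt. -/
open Set Filter MeasureTheory

/-- A barrier argument for the Riccati equation `p' = p² + V`, `V ≤ -2m`. -/
lemma riccati_lower (p V : ℝ → ℝ) (m κ T : ℝ) (hm : 0 < m) (hκ : κ ^ 2 < m)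
    (hκ0 : 0 < κ) (hp0 : ∀ t ≥ T, 0 ≤ p t)
    (hp : ∀ t ≥ T, HasDerivAt p (p t ^ 2 + V t) t) (hV : ∀ t ≥ T, V t ≤ -2 * m) :
    ∀ t ≥ T, κ ≤ p t := by
  intro t₀ ht₀
  by_contra hlt
  push Not at hlt
  set b := t₀ + (p t₀ + 1) / m with hb
  have hp00 := hp0 t₀ ht₀
  have hbt : t₀ ≤ b := by
    have : 0 ≤ (p t₀ + 1) / m := by positivity
    linarith
  have key : ∀ ⦃x⦄, x ∈ Icc t₀ b → p x ≤ p t₀ - m * (x - t₀) := by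
    refine image_le_of_deriv_right_lt_deriv_boundary (f := p)
      (f' := fun t => p t ^ 2 + V t) (B := fun x => p t₀ - m * (x - t₀))
      (B' := fun _ => -m) ?_ ?_ ?_ ?_ ?_
    · intro x hx
      exact (hp x (ht₀.le.trans hx.1)).continuousAt.continuousWithinAt
    · intro x hx
      exact (hp x (ht₀.le.trans hx.1)).hasDerivWithinAt
    · simp
    · intro x
      have h := (((hasDerivAt_id x).sub_const t₀).const_mul m).const_sub (p t₀)
      simpa using h
    · intro x hx hxe
      have h1 : T ≤ x := ht₀.le.trans hx.1
      have h2 := hV x h1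
      have h3 := hp0 x h1
      have h4 : p x ≤ κ := by
        have : 0 ≤ m * (x - t₀) := mul_nonneg hm.le (by linarith [hx.1])
        linarith
      have h5 : p x ^ 2 ≤ κ ^ 2 := by gcongr
      linarith
  have h := key (right_mem_Icc.2 hbt)
  have h2 : m * (b - t₀) = p t₀ + 1 := by
    rw [hb]; field_simp; ring
  have h3 := hp0 b (ht₀.le.trans hbt)
  linarith

lemma integrableOn_of_cont_zero (g : ℝ → ℝ) (R : ℝ) (hg : ContinuousOn g (Ici 0))
    (h0 : ∀ t, R < t → g t = 0) : IntegrableOn g (Ioi 0) := by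
  have h1 : IntegrableOn g (Icc 0 R) :=
    (hg.mono Icc_subset_Ici_self).integrableOn_Icc
  refine h1.of_forall_sdiff_eq_zero measurableSet_Ioi ?_
  intro x hx
  apply h0
  by_contra h
  exact hx.2 ⟨le_of_lt hx.1, not_lt.1 h⟩

/-- Spectral gap: there exists `a > 0` such that for all `C¹` functions
`q` with compact support and `q(0) = 0`,
`a ∫₀^∞ q² ≤ ∫₀^∞ (q'² - f'(w) q²)`. -/
theorem spectral_gap (f w : ℝ → ℝ) (hf : Monostable f) (hw : IsHeteroclinic f w) :
    ∃ a > (0 : ℝ), ∀ q : ℝ → ℝ, ContDiff ℝ 1 q → HasCompactSupport q → q 0 = 0 →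
      a * ∫ t in Set.Ioi (0 : ℝ), (q t) ^ 2 ≤
        ∫ t in Set.Ioi (0 : ℝ), ((deriv q t) ^ 2 - deriv f (w t) * (q t) ^ 2) := by
  obtain ⟨hfs, hf0, hf1, hfpos, hfd⟩ := hf
  obtain ⟨hwC, hwode, hw0, hwlim, hwpos, hwmono, hwd⟩ := hw
  set u := derivWithin w (Ici 0) with hu
  have hud : UniqueDiffOn ℝ (Ici (0 : ℝ)) := uniqueDiffOn_Ici 0
  have huC : ContDiffOn ℝ 1 u (Ici 0) := hwC.derivWithin hud (by norm_num)
  have hwc : ContinuousOn w (Ici 0) := hwC.continuousOn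
  have huc : ContinuousOn u (Ici 0) := huC.continuousOn
  have hfdiff : Differentiable ℝ f := hfs.differentiable (by simp)
  have hf'c : Continuous (deriv f) := hfs.continuous_deriv (by simp)
  have hwder : ∀ t, 0 < t → HasDerivAt w (u t) t := fun t ht =>
    ((hwC.differentiableOn (by norm_num)) t ht.le).hasDerivWithinAt.hasDerivAt (Ici_mem_nhds ht)
  have huder : ∀ t, 0 < t → HasDerivAt u (-f (w t)) t := fun t ht => by
    have h := ((huC.differentiableOn (by norm_num)) t ht.le).hasDerivWithinAt.hasDerivAt
      (Ici_mem_nhds ht)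
    have h2 : derivWithin u (Ici 0) t = -f (w t) := by linarith [hwode t ht]
    rwa [h2] at h
  have hw1 : ∀ t, 0 < t → w t < 1 := fun t ht => by
    have h1 : w t < w (t + 1) :=
      hwmono (mem_Ici.2 ht.le) (mem_Ici.2 (by linarith)) (by linarith)
    refine h1.trans_le (ge_of_tendsto hwlim ?_)
    filter_upwards [eventually_ge_atTop (t + 1)] with s hs
    exact hwmono.monotoneOn (mem_Ici.2 (by linarith)) (mem_Ici.2 (by linarith)) hs
  set p : ℝ → ℝ := fun t => f (w t) / u t with hpdef
  set V : ℝ → ℝ := fun t => deriv f (w t) with hVdef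
  have hpc : ContinuousOn p (Ici 0) :=
    (hfdiff.continuous.comp_continuousOn hwc).div huc (fun t ht => (hwd t ht).ne')
  have hVc : ContinuousOn V (Ici 0) := hf'c.comp_continuousOn hwc
  have hp0 : ∀ t, 0 ≤ t → 0 ≤ p t := fun t ht => by
    rcases ht.eq_or_lt with rfl | ht'
    · simp [hpdef, hw0, hf0]
    · exact div_nonneg (hfpos _ ⟨hwpos t ht', hw1 t ht'⟩).le (hwd t ht).le
  have hpd : ∀ t, 0 < t → HasDerivAt p (p t ^ 2 + V t) t := fun t ht => by
    have hut := (hwd t ht.le).ne'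
    have h := ((hfdiff (w t)).hasDerivAt.comp t (hwder t ht)).div (huder t ht) hut
    refine h.congr_deriv ?_
    simp only [hpdef, hVdef, Function.comp]
    field_simp
    ring
  -- lower bound for large times
  obtain ⟨T, κ, hT, hκ, hpκ⟩ : ∃ T κ : ℝ, 0 < T ∧ 0 < κ ∧ ∀ t ≥ T, κ ≤ p t := by
    set m := -deriv f 1 / 4 with hm
    have hm0 : 0 < m := by rw [hm]; linarith
    have hVlim : Tendsto V atTop (nhds (deriv f 1)) := (hf'c.tendsto 1).comp hwlim
    have hev : ∀ᶠ t in atTop, V t < -2 * m := hVlim.eventually_lt_const (by rw [hm]; linarith)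
    obtain ⟨T, hT⟩ := eventually_atTop.1 hev
    refine ⟨max T 1, Real.sqrt (m / 2), by positivity, by positivity, ?_⟩
    have hT1 : ∀ t ≥ max T 1, 0 < t := fun t ht => by
      have := le_max_right T 1
      linarith
    refine riccati_lower p V m _ _ hm0 ?_ (by positivity) (fun t ht => hp0 t (hT1 t ht).le)
      (fun t ht => hpd t (hT1 t ht)) (fun t ht => (hT t ((le_max_left T 1).trans ht)).le)
    rw [Real.sq_sqrt (by positivity)]
    linarith
  set ε := min (Real.exp (-T)) (2 * κ) / 5 with hε
  have hε0 : 0 < ε := by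
    have : 0 < min (Real.exp (-T)) (2 * κ) := lt_min (Real.exp_pos _) (by linarith)
    positivity
  have hεb : ∀ t, 0 ≤ t → 5 * ε ≤ Real.exp (-t) + 2 * p t := fun t ht => by
    have h5 : 5 * ε = min (Real.exp (-T)) (2 * κ) := by rw [hε]; ring
    rw [h5]
    rcases le_total t T with h | h
    · have h1 : Real.exp (-T) ≤ Real.exp (-t) := Real.exp_le_exp.2 (by linarith)
      have h2 := min_le_left (Real.exp (-T)) (2 * κ)
      linarith [hp0 t ht]
    · have h2 := min_le_right (Real.exp (-T)) (2 * κ)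
      linarith [hpκ t h, Real.exp_pos (-t)]
  set ψ : ℝ → ℝ := fun t => -p t + ε * (1 + Real.exp (-t)) with hψ
  set ψ' : ℝ → ℝ := fun t => -(p t ^ 2 + V t) - ε * Real.exp (-t) with hψ'
  have hψd : ∀ t, 0 < t → HasDerivAt ψ (ψ' t) t := fun t ht => by
    have h1 : HasDerivAt (fun t : ℝ => Real.exp (-t)) (Real.exp (-t) * -1) t :=
      (hasDerivAt_neg t).exp
    have h := (hpd t ht).neg.add ((h1.const_add 1).const_mul ε)
    refine h.congr_deriv ?_
    simp only [hψ']
    ring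
  have hψc : ContinuousOn ψ (Ici 0) :=
    hpc.neg.add (by fun_prop)
  have hψ'c : ContinuousOn ψ' (Ici 0) :=
    ((hpc.pow 2).add hVc).neg.sub (by fun_prop)
  have hψb : ∀ t, 0 ≤ t → V t + ε ^ 2 + ψ' t + ψ t ^ 2 ≤ 0 := fun t ht => by
    have h1 := hεb t ht
    have h2 := hp0 t ht
    have h3 := Real.exp_pos (-t)
    have h4 : Real.exp (-t) ≤ 1 := Real.exp_le_one_iff.2 (by linarith)
    simp only [hψ, hψ']
    generalize Real.exp (-t) = e at *
    have h5 : (1 + e) ^ 2 ≤ 4 := by nlinarith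
    have h6 : ε * (5 * ε) ≤ ε * (e + 2 * p t) := by gcongr
    have h7 : ε ^ 2 * (1 + e) ^ 2 ≤ ε ^ 2 * 4 := by gcongr
    have h8 : 0 ≤ p t * (ε * e) := by positivity
    nlinarith
  refine ⟨ε ^ 2, by positivity, ?_⟩
  intro q hq hqs hq0
  obtain ⟨R, hR⟩ : ∃ R, ∀ t, R < t → t ∉ tsupport q := by
    obtain ⟨R, hR⟩ := hqs.isCompact.bddAbove
    exact ⟨R, fun t ht h => absurd (hR h) (not_le.2 ht)⟩
  have hqR : ∀ t, R < t → q t = 0 := fun t ht => image_eq_zero_of_notMem_tsupport (hR t ht)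
  have hq'R : ∀ t, R < t → deriv q t = 0 := fun t ht =>
    image_eq_zero_of_notMem_tsupport (fun h => hR t ht (tsupport_deriv_subset (𝕜 := ℝ) h))
  have hqc : Continuous q := hq.continuous
  have hq'c : Continuous (deriv q) := hq.continuous_deriv le_rfl
  have hqd : ∀ t, HasDerivAt q (deriv q t) t := fun t =>
    (hq.differentiable (by norm_num) t).hasDerivAt
  set G : ℝ → ℝ := fun t => ψ' t * q t ^ 2 + ψ t * (2 * q t * deriv q t) with hG
  have hGi : IntegrableOn G (Ioi 0) := by
    refine integrableOn_of_cont_zero G R ?_ ?_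
    · exact (hψ'c.mul (by fun_prop)).add (hψc.mul (by fun_prop))
    · intro t ht
      simp [hG, hqR t ht]
  have hGint : ∫ t in Ioi (0 : ℝ), G t = 0 := by
    have h := integral_Ioi_of_hasDerivAt_of_tendsto (f := fun t => ψ t * q t ^ 2) (f' := G)
      (a := 0) (m := 0) ?_ ?_ hGi ?_
    · rw [h]; simp [hq0]
    · exact ((hψc 0 self_mem_Ici).mul (by fun_prop))
    · intro t ht
      have h := (hψd t ht).mul ((hqd t).pow 2)
      refine h.congr_deriv ?_
      simp only [hG]
      simp
    · refine tendsto_const_nhds.congr' ?_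
      filter_upwards [eventually_gt_atTop R] with t ht
      simp [hqR t ht]
  have hAi : IntegrableOn (fun t => ε ^ 2 * q t ^ 2) (Ioi 0) := by
    refine integrableOn_of_cont_zero _ R (by fun_prop) ?_
    intro t ht
    simp [hqR t ht]
  have hBi : IntegrableOn (fun t => deriv q t ^ 2 - V t * q t ^ 2) (Ioi 0) := by
    refine integrableOn_of_cont_zero _ R ?_ ?_
    · exact ContinuousOn.sub (by fun_prop) (hVc.mul (by fun_prop))
    · intro t ht
      simp [hqR t ht, hq'R t ht]
  calc ε ^ 2 * ∫ t in Ioi (0 : ℝ), q t ^ 2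
      = ∫ t in Ioi (0 : ℝ), (ε ^ 2 * q t ^ 2 + G t) := by
        rw [integral_add hAi hGi, hGint, integral_const_mul, add_zero]
    _ ≤ ∫ t in Ioi (0 : ℝ), (deriv q t ^ 2 - V t * q t ^ 2) := by
        refine setIntegral_mono_on (hAi.add hGi) hBi measurableSet_Ioi ?_
        intro t ht
        have h1 := mul_nonneg (neg_nonneg.2 (hψb t (le_of_lt ht))) (sq_nonneg (q t))
        have h2 := sq_nonneg (deriv q t - ψ t * q t)
        simp only [hG]
        nlinarith
end

section
/- Let N ≥ 2, σ ∈ (0,1) and ν > 1. For y = (y', y_N) ∈ ℝ^{N-1} × ℝ set 𝔯(y) = √(1 + |y'|²), and for ε ∈ (0,1] set 𝔯_ε(y) = 𝔯(εy). Let Γ ⊆ ℝ^N be nonempty, Γ_ε = ε⁻¹Γ, and for p : Γ → ℝ define q : Γ_ε → ℝ by q(y) = p(εy). Define the norms ‖q‖_{C^{0,σ}_ν(Γ_ε)} = sup_{Γ_ε} 𝔯_ε^ν |q| + sup_{y₁ ≠ y₂ ∈ Γ_ε} |𝔯_ε^ν q(y₁) − 𝔯_ε^ν q(y₂)|/|y₁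 − y₂|^σ, and ‖p‖_{σ,ν,Γ} = sup_Γ 𝔯^ν |p| + sup_{y ∈ Γ} 𝔯(y)^{ν+σ} · [p]_{σ, B(y,1) ∩ Γ}, where [p]_{σ,Λ} is the σ-Hölder seminorm of p over Λ. Then there exists a constant C > 0 (depending only on N, σ, ν, not on ε or Γ) such that for all p and all ε ∈ (0,1]: (i) ‖q‖_{C^{0,σ}_ν(Γ_ε)} ≤ C ‖p‖_{σ,ν,Γ}, and (ii) ‖p‖_{σ,ν−σ,Γ} ≤ C ε^{−σ} ‖q‖_{C^{0,σ}_ν(Γ_ε)}. -/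
open Set Metric

/-- The weight `𝔯(y) = √(1 + |y'|²)`, `y'` the first `N-1` coordinates of `y ∈ ℝ^N`. -/
noncomputable def rr {N : ℕ} (y : EuclideanSpace ℝ (Fin N)) : ℝ :=
  Real.sqrt (1 + ∑ i : Fin N, if (i : ℕ) < N - 1 then (y i) ^ 2 else 0)

/-- `‖p‖_{σ,ν,Γ} ≤ K`: the weighted norm
`sup_Γ 𝔯^ν |p| + sup_{y∈Γ} 𝔯(y)^{ν+σ} [p]_{σ, B(y,1)∩Γ}` is bounded by `K`
(componentwise). -/
def PNormLe {N : ℕ} (σ ν : ℝ) (Γ : Set (EuclideanSpace ℝ (Fin N)))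
    (p : EuclideanSpace ℝ (Fin N) → ℝ) (K : ℝ) : Prop :=
  (∀ y ∈ Γ, rr y ^ ν * |p y| ≤ K) ∧
  (∀ y ∈ Γ, ∀ y₁ ∈ Metric.ball y 1 ∩ Γ, ∀ y₂ ∈ Metric.ball y 1 ∩ Γ, y₁ ≠ y₂ →
    rr y ^ (ν + σ) * (|p y₁ - p y₂| / dist y₁ y₂ ^ σ) ≤ K)

/-- `‖q‖_{C^{0,σ}_ν(Γ_ε)} ≤ K` for `q(y) = p(εy)` on `Γ_ε = ε⁻¹Γ`: the weighted norm
`sup 𝔯_ε^ν |q| + [𝔯_ε^ν q]_{σ,Γ_ε}` is bounded by `K` (componentwise). -/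
def QNormLe {N : ℕ} (σ ν ε : ℝ) (Γ : Set (EuclideanSpace ℝ (Fin N)))
    (p : EuclideanSpace ℝ (Fin N) → ℝ) (K : ℝ) : Prop :=
  (∀ y : EuclideanSpace ℝ (Fin N), ε • y ∈ Γ → rr (ε • y) ^ ν * |p (ε • y)| ≤ K) ∧
  (∀ y₁ y₂ : EuclideanSpace ℝ (Fin N), ε • y₁ ∈ Γ → ε • y₂ ∈ Γ → y₁ ≠ y₂ →
    |rr (ε • y₁) ^ ν * p (ε • y₁) - rr (ε • y₂) ^ ν * p (ε • y₂)|
      ≤ K * dist y₁ y₂ ^ σ)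

lemma rr_one_le {N : ℕ} (y : EuclideanSpace ℝ (Fin N)) : 1 ≤ rr y := by
  unfold rr
  rw [Real.one_le_sqrt]
  have : 0 ≤ ∑ i : Fin N, if (i : ℕ) < N - 1 then (y i) ^ 2 else 0 :=
    Finset.sum_nonneg fun i _ => by split_ifs <;> positivity
  linarith

/-- Projection to the first `N-1` coordinates. -/
noncomputable def prj {N : ℕ} (y : EuclideanSpace ℝ (Fin N)) : EuclideanSpace ℝ (Fin N) :=
  WithLp.toLp 2 (fun i => if (i : ℕ) < N - 1 then y i else 0)

lemma rr_eq {N : ℕ} (y : EuclideanSpace ℝ (Fin N)) : rr y = Real.sqrt (1 + ‖prj y‖ ^ 2) := by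
  unfold rr
  rw [EuclideanSpace.real_norm_sq_eq]
  congr 2
  refine Finset.sum_congr rfl fun i _ => ?_
  simp only [prj]
  split_ifs <;> simp

lemma prj_dist {N : ℕ} (x y : EuclideanSpace ℝ (Fin N)) : ‖prj x - prj y‖ ≤ dist x y := by
  rw [dist_eq_norm]
  refine le_of_sq_le_sq ?_ (norm_nonneg _)
  rw [EuclideanSpace.real_norm_sq_eq, EuclideanSpace.real_norm_sq_eq]
  refine Finset.sum_le_sum fun i _ => ?_
  simp only [prj, PiLp.sub_apply]
  split_ifs
  · exact le_rfl
  · simp; positivity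

lemma rr_lip {N : ℕ} (x y : EuclideanSpace ℝ (Fin N)) : rr x ≤ rr y + dist x y := by
  have h1 := prj_dist x y
  have h2 : ‖prj x‖ ≤ ‖prj y‖ + ‖prj x - prj y‖ := by
    have := norm_add_le (prj y) (prj x - prj y)
    simpa using this
  have hy := rr_one_le y
  have hd : 0 ≤ dist x y := dist_nonneg
  have hsq : rr y ^ 2 = 1 + ‖prj y‖ ^ 2 := by
    rw [rr_eq, Real.sq_sqrt (by positivity)]
  have hle : ‖prj y‖ ≤ rr y := le_of_sq_le_sq (by linarith) (by linarith)
  rw [rr_eq x]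
  refine Real.sqrt_le_iff.2 ⟨by linarith, ?_⟩
  have h3 : ‖prj x‖ ^ 2 ≤ (‖prj y‖ + dist x y) ^ 2 :=
    pow_le_pow_left₀ (norm_nonneg _) (by linarith) 2
  nlinarith [mul_le_mul_of_nonneg_right hle hd]

lemma rpow_sub_le {ν a b : ℝ} (hν : 1 < ν) (ha : 0 < a) (hb : 1 ≤ b) (hab : a ≤ b) :
    b ^ ν - a ^ ν ≤ ν * b ^ ν * (b - a) := by
  have hb0 : 0 < b := by linarith
  have h := one_add_mul_self_le_rpow_one_add (s := a / b - 1) (by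
    have : 0 < a / b := by positivity
    linarith) hν.le
  have e : (1 + (a / b - 1)) = a / b := by ring
  rw [e, Real.div_rpow ha.le hb0.le] at h
  have hp : 0 < b ^ ν := Real.rpow_pos_of_pos hb0 _
  rw [le_div_iff₀ hp] at h
  have h4 : (b - a) / b ≤ b - a := div_le_self (by linarith) hb
  have h5 : a / b - 1 = -((b - a) / b) := by field_simp; ring
  rw [h5] at h
  have := mul_le_mul_of_nonneg_left h4 (by positivity : 0 ≤ ν * b ^ ν)
  nlinarith

lemma rpow_abs_sub_le {ν a b : ℝ} (hν : 1 < ν) (ha : 1 ≤ a) (hb : 1 ≤ b) (hab : a ≤ 3 * b) :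
    |a ^ ν - b ^ ν| ≤ ν * 3 ^ ν * b ^ ν * |a - b| := by
  have h3 : (1 : ℝ) ≤ 3 ^ ν := Real.one_le_rpow (by norm_num) (by linarith)
  have hp : 0 < b ^ ν := Real.rpow_pos_of_pos (by linarith) _
  rcases le_total a b with h | h
  · have h1 := rpow_sub_le hν (by linarith) hb h
    have h2 : a ^ ν ≤ b ^ ν := Real.rpow_le_rpow (by linarith) h (by linarith)
    rw [abs_sub_comm, abs_of_nonneg (by linarith), abs_sub_comm, abs_of_nonneg (by linarith)]
    refine h1.trans (mul_le_mul_of_nonneg_right ?_ (by linarith))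
    have : ν * 1 * b ^ ν ≤ ν * 3 ^ ν * b ^ ν := by gcongr
    linarith
  · have h1 := rpow_sub_le hν (by linarith) ha h
    have h2 : b ^ ν ≤ a ^ ν := Real.rpow_le_rpow (by linarith) h (by linarith)
    rw [abs_of_nonneg (by linarith), abs_of_nonneg (by linarith)]
    refine h1.trans (mul_le_mul_of_nonneg_right ?_ (by linarith))
    have h6 : a ^ ν ≤ 3 ^ ν * b ^ ν := by
      rw [← Real.mul_rpow (by norm_num) (by linarith)]
      exact Real.rpow_le_rpow (by linarith) hab (by linarith)
    rw [mul_assoc]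
    gcongr

lemma key {N : ℕ} {σ ν K : ℝ} (hσ : σ ∈ Set.Ioo (0 : ℝ) 1) (hν : 1 < ν)
    (x y : EuclideanSpace ℝ (Fin N)) (hd : dist x y < 2) (hxy : x ≠ y) (P : ℝ)
    (hK : rr y ^ ν * |P| ≤ K) :
    |(rr x ^ ν - rr y ^ ν) * P| ≤ 2 * ν * 3 ^ ν * K * dist x y ^ σ := by
  have hx1 := rr_one_le x
  have hy1 := rr_one_le y
  have hl := rr_lip x y
  have hl' := rr_lip y x
  rw [dist_comm] at hl'
  have hd0 : 0 < dist x y := dist_pos.2 hxy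
  have h := rpow_abs_sub_le hν hx1 hy1 (by linarith)
  have hdd : |rr x - rr y| ≤ dist x y := abs_le.2 ⟨by linarith, by linarith⟩
  have hpw : dist x y ≤ 2 * dist x y ^ σ := by
    have e : dist x y = dist x y ^ (1 - σ) * dist x y ^ σ := by
      rw [← Real.rpow_add hd0]; simp
    have h2 : dist x y ^ (1 - σ) ≤ 2 := by
      calc dist x y ^ (1 - σ) ≤ 2 ^ (1 - σ) :=
            Real.rpow_le_rpow hd0.le hd.le (by linarith [hσ.2])
        _ ≤ 2 ^ (1 : ℝ) := Real.rpow_le_rpow_of_exponent_le (by norm_num) (by linarith [hσ.1])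
        _ = 2 := by simp
    calc dist x y = dist x y ^ (1 - σ) * dist x y ^ σ := e
      _ ≤ _ := by gcongr
  have hrp : 0 < rr y ^ ν := Real.rpow_pos_of_pos (by linarith) _
  have hK0 : 0 ≤ K := le_trans (by positivity) hK
  rw [abs_mul]
  calc |rr x ^ ν - rr y ^ ν| * |P| ≤ (ν * 3 ^ ν * rr y ^ ν * |rr x - rr y|) * |P| := by gcongr
    _ = ν * 3 ^ ν * (rr y ^ ν * |P|) * |rr x - rr y| := by ring
    _ ≤ ν * 3 ^ ν * K * (2 * dist x y ^ σ) := by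
        gcongr
        exact hdd.trans hpw
    _ = _ := by ring

theorem norm_comparison (N : ℕ) (hN : 2 ≤ N) (σ ν : ℝ) (hσ : σ ∈ Set.Ioo (0 : ℝ) 1)
    (hν : 1 < ν) :
    ∃ C > (0 : ℝ), ∀ ε : ℝ, 0 < ε → ε ≤ 1 →
      ∀ Γ : Set (EuclideanSpace ℝ (Fin N)), Γ.Nonempty →
        ∀ p : EuclideanSpace ℝ (Fin N) → ℝ,
          (∀ K : ℝ, 0 ≤ K → PNormLe σ ν Γ p K → QNormLe σ ν ε Γ p (C * K)) ∧
          (∀ K : ℝ, 0 ≤ K → QNormLe σ ν ε Γ p K →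
            PNormLe σ (ν - σ) Γ p (C * ε ^ (-σ) * K)) := by
  have h3 : (1 : ℝ) ≤ 3 ^ ν := Real.one_le_rpow (by norm_num) (by linarith)
  obtain ⟨hσ0, hσ1⟩ := id hσ
  set A : ℝ := 2 * ν * 3 ^ ν with hA
  have hA0 : 0 < A := by positivity
  have hC2 : 2 + A ≤ 3 ^ ν * (2 + A) := le_mul_of_one_le_left (by linarith) h3
  refine ⟨3 ^ ν * (2 + A), by positivity, ?_⟩
  set C : ℝ := 3 ^ ν * (2 + A) with hC
  intro ε hε hε1 Γ _ p
  have he : 1 ≤ ε ^ (-σ) := Real.one_le_rpow_of_pos_of_le_one_of_nonpos hε hε1 (by linarith)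
  constructor
  · rintro K hK ⟨hp1, hp2⟩
    refine ⟨fun y hy => (hp1 _ hy).trans (by nlinarith), ?_⟩
    intro y₁ y₂ h1 h2 hne
    have hdist : dist (ε • y₁) (ε • y₂) ≤ dist y₁ y₂ := by
      rw [dist_smul₀, Real.norm_of_nonneg hε.le]
      exact mul_le_of_le_one_left dist_nonneg hε1
    have hne' : ε • y₁ ≠ ε • y₂ := fun h => hne (smul_right_injective _ hε.ne' h)
    generalize ε • y₁ = x₁ at *
    generalize ε • y₂ = x₂ at *
    have hd0 : 0 < dist x₁ x₂ := dist_pos.2 hne'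
    have hdp : dist x₁ x₂ ^ σ ≤ dist y₁ y₂ ^ σ := Real.rpow_le_rpow hd0.le hdist hσ0.le
    have hd0p : 0 < dist x₁ x₂ ^ σ := Real.rpow_pos_of_pos hd0 _
    have hr1 := rr_one_le x₁
    have hr2 := rr_one_le x₂
    have hq1 : 0 < rr x₁ ^ ν := Real.rpow_pos_of_pos (by linarith) _
    have hq2 : 0 < rr x₂ ^ ν := Real.rpow_pos_of_pos (by linarith) _
    suffices H : |rr x₁ ^ ν * p x₁ - rr x₂ ^ ν * p x₂| ≤ (2 + A) * K * dist x₁ x₂ ^ σ by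
      refine H.trans ?_
      gcongr
    rcases lt_or_ge (dist x₁ x₂) 1 with hd | hd
    · have hk := key hσ hν x₁ x₂ (by linarith) hne' (p x₂) (hp1 _ h2)
      have hs := hp2 x₁ h1 x₁ ⟨by simp, h1⟩ x₂ ⟨by simpa [dist_comm] using hd, h2⟩ hne'
      rw [← mul_div_assoc, div_le_iff₀ hd0p] at hs
      have hs2 : |rr x₁ ^ ν * (p x₁ - p x₂)| ≤ K * dist x₁ x₂ ^ σ := by
        rw [abs_mul, abs_of_pos hq1]
        refine le_trans ?_ hs
        gcongr
        · linarith
      have e : rr x₁ ^ ν * p x₁ - rr x₂ ^ ν * p x₂ =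
        rr x₁ ^ ν * (p x₁ - p x₂) + (rr x₁ ^ ν - rr x₂ ^ ν) * p x₂ := by ring
      rw [e]
      refine (abs_add_le _ _).trans ?_
      have : 0 ≤ K * dist x₁ x₂ ^ σ := by positivity
      rw [← hA] at hk
      linarith
    · have h1d : 1 ≤ dist x₁ x₂ ^ σ := Real.one_le_rpow hd hσ0.le
      have a1 : |rr x₁ ^ ν * p x₁| ≤ K := by rw [abs_mul, abs_of_pos hq1]; exact hp1 _ h1
      have a2 : |rr x₂ ^ ν * p x₂| ≤ K := by rw [abs_mul, abs_of_pos hq2]; exact hp1 _ h2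
      have a3 := abs_sub (rr x₁ ^ ν * p x₁) (rr x₂ ^ ν * p x₂)
      have a4 : K ≤ K * dist x₁ x₂ ^ σ := le_mul_of_one_le_right hK h1d
      have : 0 ≤ A * (K * dist x₁ x₂ ^ σ) := by positivity
      linarith
  · rintro K hK ⟨hq1, hq2⟩
    have hcan : ∀ x : EuclideanSpace ℝ (Fin N), ε • (ε⁻¹ • x) = x := fun x =>
      smul_inv_smul₀ hε.ne' x
    have hb : ∀ x ∈ Γ, rr x ^ ν * |p x| ≤ K := by
      intro x hx
      have := hq1 (ε⁻¹ • x)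
      rw [hcan] at this
      exact this hx
    have hKe : K ≤ ε ^ (-σ) * K := le_mul_of_one_le_left hK he
    constructor
    · intro y hy
      have h1 := hb y hy
      have : rr y ^ (ν - σ) * |p y| ≤ rr y ^ ν * |p y| := by
        gcongr
        · exact rr_one_le y
        · linarith
      have h5 : 0 ≤ ε ^ (-σ) * K := by positivity
      have : ε ^ (-σ) * K ≤ C * (ε ^ (-σ) * K) := le_mul_of_one_le_left h5 (by linarith)
      linarith
    · rintro y hy x₁ ⟨hx1, h1⟩ x₂ ⟨hx2, h2⟩ hne
      rw [mem_ball] at hx1 hx2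
      have hd : dist x₁ x₂ < 2 := by
        have := dist_triangle_right x₁ x₂ y
        linarith
      have hd0 : 0 < dist x₁ x₂ := dist_pos.2 hne
      have hd0p : 0 < dist x₁ x₂ ^ σ := Real.rpow_pos_of_pos hd0 _
      have hk := key hσ hν x₁ x₂ hd hne (p x₂) (hb _ h2)
      rw [← hA] at hk
      have hs := hq2 (ε⁻¹ • x₁) (ε⁻¹ • x₂)
      rw [hcan, hcan] at hs
      have hs := hs h1 h2 (fun h => hne (smul_right_injective _ (inv_ne_zero hε.ne') h))
      rw [dist_smul₀, Real.norm_of_nonneg (inv_nonneg.2 hε.le),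
        Real.mul_rpow (inv_nonneg.2 hε.le) hd0.le, Real.inv_rpow hε.le,
        ← Real.rpow_neg hε.le] at hs
      have hr1 := rr_one_le x₁
      have hry := rr_one_le y
      have hl := rr_lip y x₁
      rw [dist_comm] at hl
      have hq : 0 < rr x₁ ^ ν := Real.rpow_pos_of_pos (by linarith) _
      have hyx : rr y ^ ν ≤ 3 ^ ν * rr x₁ ^ ν := by
        rw [← Real.mul_rpow (by norm_num) (by linarith)]
        exact Real.rpow_le_rpow (by linarith) (by linarith) (by linarith)
      have hm : rr x₁ ^ ν * |p x₁ - p x₂| ≤ (2 + A) * (ε ^ (-σ) * K * dist x₁ x₂ ^ σ) := by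
        have e : rr x₁ ^ ν * (p x₁ - p x₂) = (rr x₁ ^ ν * p x₁ - rr x₂ ^ ν * p x₂)
          - (rr x₁ ^ ν - rr x₂ ^ ν) * p x₂ := by ring
        rw [← abs_of_pos hq, ← abs_mul, e]
        refine (abs_sub _ _).trans ?_
        have t1 : A * K * dist x₁ x₂ ^ σ ≤ A * (ε ^ (-σ) * K) * dist x₁ x₂ ^ σ := by gcongr
        have t2 : 0 ≤ ε ^ (-σ) * K * dist x₁ x₂ ^ σ := by positivity
        linarith
      rw [sub_add_cancel, ← mul_div_assoc, div_le_iff₀ hd0p]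
      calc rr y ^ ν * |p x₁ - p x₂| ≤ 3 ^ ν * rr x₁ ^ ν * |p x₁ - p x₂| := by gcongr
        _ = 3 ^ ν * (rr x₁ ^ ν * |p x₁ - p x₂|) := by ring
        _ ≤ 3 ^ ν * ((2 + A) * (ε ^ (-σ) * K * dist x₁ x₂ ^ σ)) := by gcongr
        _ = _ := by rw [hC]; ring
end
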